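/- arXiv:1911.10634 — 4 statements merged into one kernel-verified Lean document; each statement's English description precedes it below -/
import Mathlib

section
/- For every prime p with p ≡ 3 (mod 4), the sum Σ_{n=1}^{⌊2p/5⌋} (n/p) is nonnegative. -/
section GaussSign
open Polynomial
lemma pair_prod {M : Type*} [CommMonoid M] (m : ℕ) (f : ℕ → M) :
    ∏ k ∈ Finset.range (2*m), f (k+1) = ∏ k ∈ Finset.range m, (f (k+1) * f (2*m-k)) := by
  rw [two_mul, Finset.prod_range_add, Finset.prod_mul_distrib]
  congr 1
  rw [← Finset.prod_range_reflect]
  refine Finset.prod_congr rfl fun k hk => ?_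
  have := Finset.mem_range.1 hk
  congr 1
  omega

/-- Euler operator. -/
noncomputable def eulerOp {R : Type*} [CommRing R] (f : R[X]) : R[X] := X * derivative f

lemma eulerOp_iter_X_pow {R : Type*} [CommRing R] (c : R) (a n : ℕ) :
    eulerOp^[n] (C c * X ^ a) = C (c * (a : R) ^ n) * X ^ a := by
  induction n with
  | zero => simp
  | succ n ih =>
    rw [Function.iterate_succ_apply', ih, eulerOp, derivative_C_mul_X_pow]
    rcases a with _ | a
    · simp
    · simp only [Nat.add_sub_cancel, map_mul, pow_succ]
      ring

lemma eulerOp_add {R : Type*} [CommRing R] (f g : R[X]) (n : ℕ) :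
    eulerOp^[n] (f + g) = eulerOp^[n] f + eulerOp^[n] g := by
  induction n generalizing f g with
  | zero => rfl
  | succ n ih => 
    rw [Function.iterate_succ_apply, Function.iterate_succ_apply, Function.iterate_succ_apply, ← ih]
    simp [eulerOp, mul_add]

lemma eulerOp_sum {R : Type*} [CommRing R] {ι : Type*} (s : Finset ι) (f : ι → R[X]) (n : ℕ) :
    eulerOp^[n] (∑ i ∈ s, f i) = ∑ i ∈ s, eulerOp^[n] (f i) := by
  classical
  induction s using Finset.induction_on with
  | empty => 
    simp only [Finset.sum_empty]
    induction n with
    | zero => rfl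
    | succ n ih => rw [Function.iterate_succ_apply', ih]; simp [eulerOp]
  | insert a s ha ih => rw [Finset.sum_insert ha, Finset.sum_insert ha, eulerOp_add, ih]

lemma eulerOp_eval {R : Type*} [CommRing R] (n : ℕ) (Q : R[X]) :
    (eulerOp^[n] ((X - 1) ^ n * Q)).eval 1 = (n.factorial : R) * Q.eval 1 := by
  induction n generalizing Q with
  | zero => simp
  | succ n ih =>
    rw [Function.iterate_succ_apply]
    have : eulerOp ((X - 1) ^ (n+1) * Q) =
        (X-1)^n * (((n+1 : ℕ) : R[X]) * X * Q + (X-1) * X * derivative Q) := by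
      simp only [eulerOp, derivative_mul, derivative_pow, derivative_sub, derivative_X, derivative_one]
      simp
      ring
    rw [this, ih]
    simp [Nat.factorial_succ]
    ring

lemma neg_one_case (p : ℕ) [Fact p.Prime] (hp : p % 4 = 3) :
    (∑ a ∈ Finset.range p, C ((legendreSym p a : ℤ) : ZMod p) * X ^ a
      + ∏ k ∈ Finset.range (p/2), (X ^ ((k+1) * (p/2)) * (1 - X ^ (k+1)) : (ZMod p)[X])) ∉
      Ideal.span {((X - 1) ^ (p-1) : (ZMod p)[X])} := by
  intro h
  obtain ⟨R, hR⟩ := Ideal.mem_span_singleton.1 h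
  obtain ⟨m, hm⟩ : ∃ m, p = 2 * m + 1 := ⟨p/2, by omega⟩
  have hm2 : p / 2 = m := by omega
  have hm0 : m % 2 = 1 := by omega
  rw [hm2] at hR
  have h1 : ((X - 1) ^ (p-1) * R : (ZMod p)[X]) = (X-1)^m * ((X-1)^m * R) := by
    rw [← mul_assoc, ← pow_add]; congr 2; omega
  have h2 : (∏ k ∈ Finset.range m, (X ^ ((k+1) * m) * (1 - X ^ (k+1)) : (ZMod p)[X]))
      = (X - 1) ^ m * ∏ k ∈ Finset.range m, (-(X ^ ((k+1) * m) * ∑ i ∈ Finset.range (k+1), X ^ i)) := by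
    conv_rhs => rw [← Finset.card_range m, ← Finset.prod_const, Finset.card_range]
    rw [← Finset.prod_mul_distrib]
    refine Finset.prod_congr rfl fun k _ => ?_
    have := geom_sum_mul (X : (ZMod p)[X]) (k+1)
    linear_combination (X ^ ((k+1) * m)) * this
  have h3 := congrArg (fun f => (eulerOp^[m] f).eval 1) hR
  simp only [eulerOp_add, eulerOp_sum, h1, h2, eulerOp_eval, eulerOp_iter_X_pow, eval_add,
    eval_finsetSum] at h3
  have hw : ((m.factorial : ℕ) : ZMod p) ^ 2 = 1 := by
    have := ZMod.wilsons_lemma p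
    rw [← Finset.prod_range_add_one_eq_factorial, show p - 1 = 2 * m by omega, pair_prod m (fun k => k)] at this
    have hmm : (m.factorial : ZMod p) = ∏ k ∈ Finset.range m, ((k : ZMod p) + 1) := by
      rw [← Finset.prod_range_add_one_eq_factorial]; push_cast; rfl
    have e : ((∏ k ∈ Finset.range m, ((k+1) * (2*m-k)) : ℕ) : ZMod p) = - (m.factorial : ZMod p)^2 := by
      push_cast
      rw [hmm, ← Finset.prod_pow]
      have : (-1 : ZMod p) = ∏ k ∈ Finset.range m, (-1) := by
        rw [Finset.prod_const, Finset.card_range, Odd.neg_one_pow (Nat.odd_iff.2 hm0)]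
      rw [neg_eq_neg_one_mul, this, ← Finset.prod_mul_distrib]
      refine Finset.prod_congr rfl fun k hk => ?_
      have hk := Finset.mem_range.1 hk
      rw [Nat.cast_sub (by omega)]
      have : ((2 * m + 1 : ℕ) : ZMod p) = 0 := by rw [← hm]; simp
      push_cast at this ⊢
      linear_combination (k+1 : ZMod p) * this
    rw [e] at this
    linear_combination -this
  have hs : ∑ a ∈ Finset.range p, (C (((legendreSym p a : ℤ) : ZMod p) * (a : ZMod p) ^ m) * X ^ a).eval 1 = -1 := by
    have : ∀ a ∈ Finset.range p, (C (((legendreSym p a : ℤ) : ZMod p) * (a : ZMod p) ^ m) * X ^ a).eval 1 = if a = 0 then 0 else 1 := by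
      intro a ha
      have ha := Finset.mem_range.1 ha
      simp only [eval_mul, eval_C, eval_pow, eval_X, one_pow, mul_one, legendreSym.eq_pow, hm2]
      split_ifs with h
      · subst h; simp; omega
      · have h0 : (a : ZMod p) ≠ 0 := by
          rw [Ne, ZMod.natCast_eq_zero_iff]
          exact Nat.not_dvd_of_pos_of_lt (by omega) ha
        rw [Int.cast_natCast, ← pow_add, show m + m = p - 1 by omega, ZMod.pow_card_sub_one_eq_one h0]
    rw [Finset.sum_congr rfl this]
    rw [show Finset.range p = Finset.range (2 * m + 1) by rw [← hm], Finset.sum_range_succ']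
    simp
    have : ((2 * m + 1 : ℕ) : ZMod p) = 0 := by rw [← hm]; simp
    push_cast at this
    linear_combination this
  have hq : (∏ k ∈ Finset.range m, (-(X ^ ((k+1) * m) * ∑ i ∈ Finset.range (k+1), X ^ i)) : (ZMod p)[X]).eval 1 = - (m.factorial : ZMod p) := by
    rw [eval_prod]
    simp only [eval_neg, eval_mul, eval_pow, eval_X, one_pow, eval_finsetSum]
    rw [← Finset.prod_range_add_one_eq_factorial, Finset.prod_neg]
    simp [Odd.neg_one_pow (Nat.odd_iff.2 hm0), -Finset.prod_range_add_one_eq_factorial]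
  rw [hs, hq] at h3
  have h4 : (2 : ZMod p) = 0 := by
    simp [show m ≠ 0 by omega] at h3
    linear_combination -h3 - hw
  have h5 : p ∣ 2 := by
    rw [← ZMod.natCast_eq_zero_iff]; exact_mod_cast h4
  have := Nat.le_of_dvd (by norm_num) h5
  omega

lemma P_eval (p m : ℕ) (hm : p = 2 * m + 1) (hm0 : m % 2 = 1) :
    ∏ k ∈ Finset.range m, (Complex.exp (2 * Real.pi * Complex.I / p) ^ ((k+1) * m) *
      (1 - Complex.exp (2 * Real.pi * Complex.I / p) ^ (k+1))) = Complex.I * (Real.sqrt p : ℝ) := by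
  have hp0 : (p : ℂ) ≠ 0 := by rw [hm]; exact_mod_cast (by omega : 2 * m + 1 ≠ 0)
  have hp0' : (0 : ℝ) < p := by rw [hm]; exact_mod_cast (by omega : 0 < 2 * m + 1)
  set ζ := Complex.exp (2 * Real.pi * Complex.I / p) with hζ
  have hprim : IsPrimitiveRoot ζ (2 * m + 1) := by
    rw [← hm]; exact Complex.isPrimitiveRoot_exp p (by omega)
  -- first: square
  have hsq : (∏ k ∈ Finset.range m, (ζ ^ ((k+1) * m) * (1 - ζ ^ (k+1)))) ^ 2 = -(p : ℂ) := by
    have h1 := hprim.prod_one_sub_pow_eq_order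
    rw [pair_prod m (fun k => 1 - ζ ^ k)] at h1
    have : (p : ℂ) = ((2 * m : ℕ) : ℂ) + 1 := by rw [hm]; push_cast; ring
    rw [this, ← h1, ← Finset.prod_pow]
    have : (-1 : ℂ) = ∏ k ∈ Finset.range m, (-1) := by
      rw [Finset.prod_const, Finset.card_range, Odd.neg_one_pow (Nat.odd_iff.2 hm0)]
    rw [neg_eq_neg_one_mul, this, ← Finset.prod_mul_distrib]
    refine Finset.prod_congr rfl fun k hk => ?_
    have hk := Finset.mem_range.1 hk
    have e1 : ζ ^ (2 * m + 1) = 1 := hprim.pow_eq_one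
    have e2 : (ζ ^ ((k+1)*m)) ^ 2 * ζ ^ (k+1) = 1 := by
      rw [← pow_mul, ← pow_add, show (k+1)*m*2 + (k+1) = (2*m+1) * (k+1) by ring, pow_mul, e1, one_pow]
    have e3 : ζ ^ (2 * m - k) * ζ ^ (k+1) = 1 := by
      rw [← pow_add, show 2 * m - k + (k+1) = 2*m+1 by omega, e1]
    have e4 : ζ ^ (k+1) ≠ 0 := fun h => by rw [h] at e3; simp at e3
    have e5 : (ζ ^ ((k+1)*m)) ^ 2 = ζ ^ (2 * m - k) := mul_right_cancel₀ e4 (e2.trans e3.symm)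
    rw [mul_pow, e5]
    linear_combination (ζ ^ (k+1) - 1) * e3
  -- second : I * positive
  have hform : ∏ k ∈ Finset.range m, (ζ ^ ((k+1) * m) * (1 - ζ ^ (k+1))) =
      Complex.I * ((∏ k ∈ Finset.range m, (2 * Real.sin (Real.pi * (k+1) / p)) : ℝ) : ℂ) := by
    have hI : ∏ k ∈ Finset.range m, ((-1) ^ k * Complex.I) = Complex.I := by
      obtain ⟨j, rfl⟩ : ∃ j, m = 2 * j + 1 := ⟨m/2, by omega⟩
      clear * - 
      induction j with
      | zero => simp
      | succ j ih =>
        rw [show 2 * (j+1) + 1 = 2 * j + 1 + 1 + 1 by ring, Finset.prod_range_succ, Finset.prod_range_succ, ih]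
        rw [show 2 * j + 1 + 1 = 2 * (j + 1) by ring, pow_mul, pow_succ, pow_mul]
        simp
    rw [← hI]
    push_cast
    rw [← Finset.prod_mul_distrib]
    refine Finset.prod_congr rfl fun k hk => ?_
    set h := Complex.exp (Real.pi * Complex.I / p) with hh
    have z2 : ζ = h ^ 2 := by
      rw [hζ, hh, ← Complex.exp_nat_mul]; congr 1; push_cast; ring
    have hhp : h ^ p = -1 := by
      rw [hh, ← Complex.exp_nat_mul, ← Complex.exp_pi_mul_I]; congr 1; field_simp
    have hK : h ^ (k+1) = Complex.exp ((Real.pi * (k+1) / p : ℂ) * Complex.I) := by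
      rw [hh, ← Complex.exp_nat_mul]; congr 1; push_cast; ring
    have hK' : Complex.exp (-(Real.pi * (k+1) / p : ℂ) * Complex.I) * h ^ (k+1) = 1 := by
      rw [hK, ← Complex.exp_add]; simp
    have e1 : ζ ^ ((k+1) * m) * h ^ (k+1) = (-1) ^ (k+1) := by
      rw [z2, ← pow_mul, ← pow_add, show 2 * ((k+1)*m) + (k+1) = (2*m+1) * (k+1) by ring, pow_mul, ← hm, hhp]
    have e2 : ζ ^ ((k+1) * m) = (-1) ^ (k+1) * Complex.exp (-(Real.pi * (k+1) / p : ℂ) * Complex.I) := by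
      linear_combination Complex.exp (-(Real.pi * (k+1) / p : ℂ) * Complex.I) * e1 - ζ ^ ((k+1) * m) * hK'
    rw [e2, z2, ← pow_mul, mul_comm 2, pow_mul]
    rw [Complex.sin]
    rw [← hK]
    rw [pow_succ (-1 : ℂ)]
    linear_combination ((-1:ℂ)^k * h^(k+1)) * hK' - (-1:ℂ)^k * (Complex.exp (-(Real.pi * (k+1) / p : ℂ) * Complex.I) - h^(k+1)) * Complex.I_sq
  have hpos : 0 < ∏ k ∈ Finset.range m, (2 * Real.sin (Real.pi * (k+1) / p)) := by
    refine Finset.prod_pos fun k hk => ?_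
    have hk := Finset.mem_range.1 hk
    refine mul_pos two_pos (Real.sin_pos_of_pos_of_lt_pi (by positivity) ?_)
    rw [div_lt_iff₀ hp0']
    refine mul_lt_mul_of_pos_left ?_ Real.pi_pos
    exact_mod_cast (by omega : k + 1 < p)
  rw [hform] at hsq ⊢
  congr 2
  symm
  rw [Real.sqrt_eq_iff_mul_self_eq hp0'.le hpos.le, ← sq]
  rw [mul_pow, Complex.I_sq] at hsq
  have : (((∏ k ∈ Finset.range m, (2 * Real.sin (Real.pi * (k+1) / p))) ^ 2 : ℝ) : ℂ) = ((p : ℝ) : ℂ) := by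
    push_cast at hsq ⊢
    linear_combination -hsq
  exact_mod_cast this.symm

lemma gauss_sum_sign (p : ℕ) [Fact p.Prime] (hp : p % 4 = 3)
    (hsq : (∑ a ∈ Finset.range p, (legendreSym p a : ℂ) * Complex.exp (2 * Real.pi * Complex.I / p) ^ a) ^ 2 = -(p : ℂ)) :
    ∑ a ∈ Finset.range p, (legendreSym p a : ℂ) * Complex.exp (2 * Real.pi * Complex.I / p) ^ a =
      Complex.I * (Real.sqrt p : ℝ) := by
  have hpp : p.Prime := Fact.out
  have h1 : (Complex.I * (Real.sqrt p : ℝ)) ^ 2 = -(p:ℂ) := by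
    rw [mul_pow, Complex.I_sq, ← Complex.ofReal_pow, Real.sq_sqrt (by positivity)]; simp
  rcases sq_eq_sq_iff_eq_or_eq_neg.1 (hsq.trans h1.symm) with h | h
  · exact h
  exfalso
  have hprim := Complex.isPrimitiveRoot_exp p hpp.ne_zero
  have hP := P_eval p (p/2) (by omega) (by omega)
  rw [← hP] at h
  set ζ := Complex.exp (2 * Real.pi * Complex.I / p) with hζ
  let F : ℤ[X] := ∑ a ∈ Finset.range p, C (legendreSym p a : ℤ) * X ^ a
      + ∏ k ∈ Finset.range (p/2), (X ^ ((k+1) * (p/2)) * (1 - X ^ (k+1)))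
  have hF : aeval ζ F = 0 := by
    simp only [F, map_add, map_sum, map_prod, map_mul, map_sub, map_pow, aeval_X, aeval_C, map_one]
    simp only [algebraMap_int_eq, eq_intCast]
    rw [h]; ring
  have hd := minpoly.isIntegrallyClosed_dvd (hprim.isIntegral hpp.pos) hF
  rw [← Polynomial.cyclotomic_eq_minpoly hprim hpp.pos] at hd
  have hd2 := _root_.map_dvd (mapRingHom (Int.castRingHom (ZMod p))) hd
  apply neg_one_case p hp
  rw [Ideal.mem_span_singleton]
  convert hd2 using 1
  · have := Polynomial.cyclotomic_mul_prime_pow_eq (ZMod p) (p := p) (m := 1) (k := 1) (by simpa using hpp.one_lt.ne') one_pos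
    simp at this
    simp [this]
  · simp [F, Polynomial.map_sum, Polynomial.map_prod]

lemma sum_zmod_range (p : ℕ) [NeZero p] {M : Type*} [AddCommMonoid M] (f : ZMod p → M) :
    ∑ x : ZMod p, f x = ∑ a ∈ Finset.range p, f (a : ZMod p) := by
  refine Finset.sum_nbij' (fun x => x.val) (fun a => (a : ZMod p)) ?_ ?_ ?_ ?_ ?_
  · intro x _; exact Finset.mem_range.2 (ZMod.val_lt x)
  · intros; simp
  · intro x _; simp
  · intro a ha; exact ZMod.val_cast_of_lt (Finset.mem_range.1 ha)
  · intro x _; simp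

lemma gauss_fourier (p : ℕ) [Fact p.Prime] (hp : p % 4 = 3) (n : ℕ) :
    ∑ a ∈ Finset.range p, (legendreSym p a : ℝ) * Real.sin (2 * Real.pi * n * (a / p)) =
      (legendreSym p n : ℝ) * Real.sqrt p := by
  have hpp : p.Prime := Fact.out
  have hp0 : (p : ℂ) ≠ 0 := by exact_mod_cast hpp.ne_zero
  let χ : MulChar (ZMod p) ℂ := (quadraticChar (ZMod p)).ringHomComp (Int.castRingHom ℂ)
  let ψ : AddChar (ZMod p) ℂ := ZMod.stdAddChar
  have hχ : ∀ a : ℕ, χ (a : ZMod p) = (legendreSym p a : ℂ) := by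
    intro a; simp [χ, legendreSym]
  have hψ : ∀ a : ℕ, ψ (a : ZMod p) = Complex.exp (2 * Real.pi * Complex.I / p) ^ a := by
    intro a
    have := ZMod.stdAddChar_coe (N := p) (a : ℤ)
    simp only [Int.cast_natCast] at this
    rw [← Complex.exp_nat_mul]
    simp only [ψ, this]
    congr 1; ring
  have hrc : ringChar (ZMod p) ≠ 2 := by
    rw [ZMod.ringChar_zmod_n]; omega
  have hquad : χ.IsQuadratic := (quadraticChar_isQuadratic (ZMod p)).comp _
  have hne : χ ≠ 1 := by
    have := quadraticChar_ne_one hrc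
    exact (MulChar.ringHomComp_ne_one_iff (Int.castRingHom ℂ).injective_int).2 this
  have hprimψ : ψ.IsPrimitive := ZMod.isPrimitive_stdAddChar p
  have hsq := gaussSum_sq hne hquad hprimψ
  have hm1 : χ (-1) = -1 := by
    have h := legendreSym.at_neg_one (p := p) (by omega)
    rw [ZMod.χ₄_nat_three_mod_four hp] at h
    have : χ (-1) = ((legendreSym p (-1) : ℤ) : ℂ) := by simp [χ, legendreSym]
    rw [this, h]; simp
  have hg : gaussSum χ ψ = ∑ a ∈ Finset.range p, (legendreSym p a : ℂ) * Complex.exp (2 * Real.pi * Complex.I / p) ^ a := by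
    rw [gaussSum, sum_zmod_range]
    simp only [hχ, hψ]
  have hgv : gaussSum χ ψ = Complex.I * (Real.sqrt p : ℝ) := by
    rw [hg]; apply gauss_sum_sign p hp
    rw [← hg, hsq, hm1, ZMod.card]; ring
  have hn : ∑ x : ZMod p, χ x * ψ (n * x) = χ n * gaussSum χ ψ := by
    by_cases h0 : (n : ZMod p) = 0
    · rw [h0]; simp [MulChar.sum_eq_zero_of_ne_one hne]; exact Or.inl (MulChar.map_zero χ)
    · have := gaussSum_mulShift_eq χ ψ (Units.mk0 (n : ZMod p) h0)
      rw [hquad.inv] at this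
      simpa [gaussSum] using this
  rw [sum_zmod_range, hgv, hχ] at hn
  have h2 := congrArg Complex.im hn
  rw [Complex.im_sum] at h2
  have e : ((legendreSym p n : ℂ) * (Complex.I * (Real.sqrt p : ℝ))).im = (legendreSym p n : ℝ) * Real.sqrt p := by
    have : ((legendreSym p n : ℂ) * (Complex.I * (Real.sqrt p : ℝ))) = ((legendreSym p n * Real.sqrt p : ℝ) : ℂ) * Complex.I := by
      push_cast; ring
    rw [this, Complex.im_ofReal_mul, Complex.I_im, mul_one]
  rw [e] at h2
  rw [← h2]
  refine Finset.sum_congr rfl fun a _ => ?_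
  rw [hχ, ← Nat.cast_mul, hψ, ← Complex.exp_nat_mul]
  have : ((n * a : ℕ) : ℂ) * (2 * Real.pi * Complex.I / p) = ((2 * Real.pi * n * (a / p) : ℝ) : ℂ) * Complex.I := by
    push_cast; ring
  rw [this]
  have : ((legendreSym p a : ℤ) : ℂ) = ((legendreSym p a : ℝ) : ℂ) := by simp
  rw [this, Complex.im_ofReal_mul, Complex.exp_ofReal_mul_I_im]

end GaussSign

open Filter Topology in
lemma abel_limit {l : Filter ℝ} (g : ℕ → ℝ) (K : ℝ) (hG : ∀ n, |∑ i ∈ Finset.range n, g i| ≤ K)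
    (w : ℝ → ℕ → ℝ) (v b : ℕ → ℝ) (hb : Summable b)
    (hw : ∀ᶠ t in l, (∀ n, |w t n - w t (n+1)| ≤ b n) ∧ Tendsto (w t) atTop (𝓝 0) ∧
      Summable (fun n => g n * w t n))
    (hv : ∀ n, Tendsto (fun t => w t n) l (𝓝 (v n))) :
    Tendsto (fun t => ∑' n, g n * w t n) l
      (𝓝 (∑' n, (∑ i ∈ Finset.range (n+1), g i) * (v n - v (n+1)))) := by
  have key : ∀ (u : ℕ → ℝ) (n : ℕ), ∑ i ∈ Finset.range n, g i * u i =
      (∑ i ∈ Finset.range n, g i) * u n +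
        ∑ j ∈ Finset.range n, (∑ i ∈ Finset.range (j+1), g i) * (u j - u (j+1)) := by
    intro u n
    induction n with
    | zero => simp
    | succ n ih =>
      rw [Finset.sum_range_succ, ih, Finset.sum_range_succ _ n,
        Finset.sum_range_succ (fun j => (∑ i ∈ Finset.range (j+1), g i) * (u j - u (j+1))) n,
        Finset.sum_range_succ _ n]
      ring
  have hbd : ∀ᶠ t in l, ∀ n, ‖(∑ i ∈ Finset.range (n+1), g i) * (w t n - w t (n+1))‖ ≤ K * b n := by
    filter_upwards [hw] with t ht n
    rw [norm_mul]
    exact mul_le_mul (hG _) (ht.1 n) (norm_nonneg _) ((abs_nonneg _).trans (hG 0))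
  have hlim := tendsto_tsum_of_dominated_convergence (hb.mul_left K)
    (fun n => ((hv n).sub (hv (n+1))).const_mul (∑ i ∈ Finset.range (n+1), g i)) hbd
  refine hlim.congr' ?_
  filter_upwards [hw, hbd] with t ht htb
  obtain ⟨_, h0, hs⟩ := ht
  have hs2 : Summable (fun n => (∑ i ∈ Finset.range (n+1), g i) * (w t n - w t (n+1))) :=
    Summable.of_norm_bounded (hb.mul_left K) htb
  have t1 := hs.hasSum.tendsto_sum_nat
  have t2 := hs2.hasSum.tendsto_sum_nat
  have t3 : Tendsto (fun n => (∑ i ∈ Finset.range n, g i) * w t n) atTop (𝓝 0) := by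
    refine squeeze_zero_norm (a := fun n => K * |w t n|) (fun n => ?_) ?_
    · rw [norm_mul]; exact mul_le_mul_of_nonneg_right (hG n) (norm_nonneg _)
    · simpa using h0.abs.const_mul K
  have t4 := t3.add t2
  rw [zero_add] at t4
  refine tendsto_nhds_unique t4 (t1.congr fun n => key _ n)

lemma summable_b : Summable (fun n : ℕ => 2 / ((n : ℝ) + 1) ^ 2) := by
  have := (summable_nat_add_iff 1).2 (Real.summable_one_div_nat_pow.2 (one_lt_two : 1 < 2))
  refine (this.mul_left 2).congr fun n => ?_
  push_cast; ring

lemma pow_bound (r : ℝ) (h0 : 0 < r) (h1 : r < 1) (n : ℕ) :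
    (n + 1) * (1 - r) * r ^ n ≤ 1 - r ^ (n+1) := by
  induction n with
  | zero => simp
  | succ n ih =>
    have h2 : r ^ (n+1) ≤ 1 := pow_le_one₀ h0.le h1.le
    have h3 := mul_le_mul_of_nonneg_left ih h0.le
    have h4 := mul_nonneg (sub_nonneg.2 h1.le) (sub_nonneg.2 h2)
    push_cast
    have e1 : r ^ (n+1+1) = r * r ^ (n+1) := by ring
    have e2 : r * ((n + 1) * (1 - r) * r ^ n) = (n + 1) * (1 - r) * r ^ (n+1) := by ring
    rw [e2] at h3
    rw [e1]
    nlinarith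

open Filter Topology in
lemma abel_power (g : ℕ → ℝ) (K : ℝ) (hg : ∀ n, |g n| ≤ K)
    (hG : ∀ n, |∑ i ∈ Finset.range n, g i| ≤ K) :
    Tendsto (fun r : ℝ => ∑' n : ℕ, g n * (r ^ (n+1) / ((n:ℝ)+1))) (𝓝[<] 1)
      (𝓝 (∑' n : ℕ, (∑ i ∈ Finset.range (n+1), g i) * (1 / ((n:ℝ)+1) - 1 / (((n+1 : ℕ):ℝ)+1)))) := by
  refine abel_limit g K hG (fun r n => r ^ (n+1) / ((n:ℝ)+1)) (fun n => 1 / ((n:ℝ)+1)) _ summable_b ?_ ?_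
  · have : Set.Ioo (0:ℝ) 1 ∈ 𝓝[<] (1:ℝ) := Ioo_mem_nhdsLT one_pos
    filter_upwards [this] with r hr
    obtain ⟨h0, h1⟩ := hr
    have hle : ∀ n : ℕ, |r ^ (n+1) / ((n:ℝ)+1)| ≤ r ^ n := by
      intro n
      rw [abs_of_nonneg (by positivity), div_le_iff₀ (by positivity), pow_succ]
      refine mul_le_mul_of_nonneg_left ?_ (by positivity)
      have : (0:ℝ) ≤ n := by positivity
      linarith
    refine ⟨fun n => ?_, ?_, ?_⟩
    · have hb := pow_bound r h0 h1 (n+1)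
      have hp : 0 < r ^ (n+1) := by positivity
      have hp2 : r ^ (n+2) ≤ 1 := pow_le_one₀ h0.le h1.le
      have hn : (0:ℝ) ≤ n := by positivity
      have e : r ^ (n+1) / ((n:ℝ)+1) - r ^ (n+1+1) / (((n+1 : ℕ):ℝ)+1) =
          (((n+1 : ℕ):ℝ) + 1) * (1 - r) * r ^ (n+1) / ((n+1) * (n+2)) + r^(n+2) / ((n+1)*(n+2)) := by
        push_cast
        field_simp
        ring
      have hp3 : 0 < r ^ (n+2) := by positivity
      have hnn : 0 ≤ (((n+1 : ℕ):ℝ) + 1) * (1 - r) * r ^ (n+1) := by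
        have := sub_nonneg.2 h1.le
        positivity
      rw [e, ← add_div, abs_of_nonneg (by positivity), div_le_div_iff₀ (by positivity) (by positivity)]
      have : (((n+1 : ℕ):ℝ) + 1) * (1 - r) * r ^ (n+1) + r^(n+2) ≤ 2 := by
        have : r ^ (n+1+1) = r ^ (n+2) := rfl
        linarith
      calc _ ≤ 2 * ((n:ℝ)+1)^2 := by gcongr
        _ ≤ _ := by nlinarith
    · exact squeeze_zero_norm hle (tendsto_pow_atTop_nhds_zero_of_lt_one h0.le h1)
    · refine Summable.of_norm_bounded ((summable_geometric_of_lt_one h0.le h1).mul_left K) fun n => ?_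
      rw [norm_mul]
      exact mul_le_mul (hg n) (hle n) (norm_nonneg _) ((abs_nonneg _).trans (hg 0))
  · intro n
    have : Tendsto (fun r : ℝ => r ^ (n+1) / ((n:ℝ)+1)) (𝓝 1) (𝓝 ((1:ℝ) ^ (n+1) / ((n:ℝ)+1))) :=
      (Continuous.tendsto (by fun_prop) 1)
    rw [one_pow] at this
    exact this.mono_left nhdsWithin_le_nhds

lemma summable_dir (g : ℕ → ℝ) (K : ℝ) (hg : ∀ n, |g n| ≤ K) (s : ℝ) (h1 : 1 < s) :
    Summable (fun n : ℕ => g n * ((n:ℝ)+1) ^ (-s)) := by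
  have h := (summable_nat_add_iff 1).2 (Real.summable_nat_rpow.2 (by linarith : -s < -1))
  refine Summable.of_norm_bounded (h.mul_left K) fun n => ?_
  rw [norm_mul]
  push_cast
  refine mul_le_mul (hg n) ?_ (norm_nonneg _) ((abs_nonneg _).trans (hg 0))
  rw [Real.norm_of_nonneg (by positivity)]

open Filter Topology in
lemma abel_dirichlet (g : ℕ → ℝ) (K : ℝ) (hg : ∀ n, |g n| ≤ K)
    (hG : ∀ n, |∑ i ∈ Finset.range n, g i| ≤ K) :
    Tendsto (fun s : ℝ => ∑' n : ℕ, g n * ((n:ℝ)+1) ^ (-s)) (𝓝[>] 1)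
      (𝓝 (∑' n : ℕ, (∑ i ∈ Finset.range (n+1), g i) * (1 / ((n:ℝ)+1) - 1 / (((n+1 : ℕ):ℝ)+1)))) := by
  refine abel_limit g K hG (fun s n => ((n:ℝ)+1) ^ (-s)) (fun n => 1 / ((n:ℝ)+1)) _ summable_b ?_ ?_
  · have : Set.Ioo (1:ℝ) 2 ∈ 𝓝[>] (1:ℝ) := Ioo_mem_nhdsGT one_lt_two
    filter_upwards [this] with s hs
    obtain ⟨h1, h2⟩ := hs
    refine ⟨fun n => ?_, ?_, summable_dir g K hg s h1⟩
    · set x : ℝ := (n:ℝ) + 1 with hx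
      have hx1 : 1 ≤ x := by rw [hx]; have : (0:ℝ) ≤ n := by positivity
                             linarith
      have hx0 : 0 < x := by linarith
      have hx2 : (((n+1 : ℕ):ℝ)+1) = x + 1 := by rw [hx]; push_cast; ring
      simp only [hx2]
      have hy0 : 0 < x / (x+1) := by positivity
      have hy1 : x / (x+1) ≤ 1 := (div_le_one (by positivity)).2 (by linarith)
      have e : (x+1) ^ (-s) = x ^ (-s) * (x / (x+1)) ^ s := by
        rw [Real.div_rpow hx0.le (by positivity), Real.rpow_neg hx0.le, Real.rpow_neg (by positivity)]
        have : x ^ s ≠ 0 := (Real.rpow_pos_of_pos hx0 s).ne'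
        field_simp
      have hy2 : (x / (x+1)) ^ (2:ℝ) ≤ (x / (x+1)) ^ s :=
        Real.rpow_le_rpow_of_exponent_ge hy0 hy1 h2.le
      have hy3 : (x / (x+1)) ^ s ≤ 1 := Real.rpow_le_one hy0.le hy1 (by linarith)
      have hx3 : x ^ (-s) ≤ x ^ (-1:ℝ) := Real.rpow_le_rpow_of_exponent_le hx1 (by linarith)
      have hx4 : 0 < x ^ (-s) := Real.rpow_pos_of_pos hx0 _
      rw [e, abs_of_nonneg (by nlinarith), ← mul_one_sub]
      have hz : 1 - (x / (x+1)) ^ s ≤ 2 / x := by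
        rw [Real.rpow_two] at hy2
        have : 1 - (x/(x+1))^2 ≤ 2 / x := by
          rw [div_pow, one_sub_div (by positivity), div_le_div_iff₀ (by positivity) (by positivity)]
          nlinarith
        linarith
      calc _ ≤ x ^ (-1:ℝ) * (2 / x) := mul_le_mul hx3 hz (by linarith) (by positivity)
        _ = _ := by rw [Real.rpow_neg_one]; field_simp
    · have := tendsto_rpow_neg_atTop (show 0 < s by linarith)
      have h3 : Tendsto (fun n : ℕ => (n:ℝ) + 1) atTop atTop :=
        tendsto_atTop_add_const_right _ _ tendsto_natCast_atTop_atTop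
      exact this.comp h3
  · intro n
    have hc : Continuous (fun s : ℝ => ((n:ℝ)+1) ^ (-s)) := by
      refine Continuous.rpow continuous_const continuous_neg fun s => Or.inl (by positivity)
    have := hc.tendsto 1
    rw [Real.rpow_neg_one, ← one_div] at this
    exact this.mono_left nhdsWithin_le_nhds

lemma dir_nonneg (f : ℕ →*₀ ℝ) (hf : ∀ n, |f n| ≤ 1) (s : ℝ) (h1 : 1 < s) :
    0 ≤ ∑' n : ℕ, f (n+1) * ((n:ℝ)+1) ^ (-s) := by
  let F : ℕ →*₀ ℝ :=
    { toFun := fun n => f n * (n:ℝ) ^ (-s)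
      map_zero' := by simp
      map_one' := by simp
      map_mul' := by
        intro a b
        simp only [map_mul, Nat.cast_mul]
        rw [Real.mul_rpow (by positivity) (by positivity)]
        ring }
  have hF : ∀ n, F n = f n * (n:ℝ) ^ (-s) := fun _ => rfl
  have hle : ∀ n, ‖F n‖ ≤ (n:ℝ) ^ (-s) := by
    intro n
    rw [hF, norm_mul, Real.norm_of_nonneg (show 0 ≤ (n:ℝ) ^ (-s) by positivity)]
    exact mul_le_of_le_one_left (by positivity) (hf n)
  have hs : Summable (fun n => ‖F n‖) :=
    Summable.of_nonneg_of_le (fun _ => norm_nonneg _) hle (Real.summable_nat_rpow.2 (by linarith))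
  have ht := EulerProduct.eulerProduct_completely_multiplicative hs
  have h0 : 0 ≤ ∑' n, F n := by
    refine ge_of_tendsto' ht fun n => Finset.prod_nonneg fun q hq => inv_nonneg.2 (sub_nonneg.2 ?_)
    refine (le_abs_self _).trans ((hle q).trans ?_)
    have hq := Nat.prime_of_mem_primesBelow hq
    exact Real.rpow_le_one_of_one_le_of_nonpos (by exact_mod_cast hq.one_le) (by linarith)
  rw [hs.of_norm.tsum_eq_zero_add, map_zero, zero_add] at h0
  simpa [hF] using h0

lemma arg_saw (x : ℝ) (h0 : 0 < x) (h1 : x < 1) :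
    Complex.arg (1 - Complex.exp ((2 * Real.pi * x : ℝ) * Complex.I)) = Real.pi * (x - 1/2) := by
  have hpi := Real.pi_pos
  have hs : 0 < 2 * Real.sin (Real.pi * x) :=
    mul_pos two_pos (Real.sin_pos_of_pos_of_lt_pi (by positivity) (by nlinarith))
  have := Complex.arg_mul_cos_add_sin_mul_I hs (θ := Real.pi * (x - 1/2)) ⟨by nlinarith, by nlinarith⟩
  rw [← this]
  congr 1
  rw [← Complex.ofReal_cos, ← Complex.ofReal_sin, Complex.exp_mul_I, ← Complex.ofReal_cos, ← Complex.ofReal_sin]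
  rw [show Real.pi * (x - 1/2) = Real.pi * x - Real.pi / 2 by ring, Real.cos_sub_pi_div_two, Real.sin_sub_pi_div_two,
    show 2 * Real.pi * x = 2 * (Real.pi * x) by ring, Real.cos_two_mul, Real.sin_two_mul]
  have := Real.sin_sq_add_cos_sq (Real.pi * x)
  have h2 : ((Real.sin (Real.pi * x) : ℝ) : ℂ) ^ 2 + ((Real.cos (Real.pi * x) : ℝ) : ℂ) ^ 2 = 1 := by exact_mod_cast this
  push_cast at h2 ⊢
  linear_combination -2 * h2

lemma saw_hasSum (x r : ℝ) (h0 : 0 < r) (h1 : r < 1) :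
    HasSum (fun n : ℕ => Real.sin (2 * Real.pi * (n+1 : ℕ) * x) * (r ^ (n+1) / ((n:ℝ)+1)))
      (-(Complex.arg (1 - r * Complex.exp ((2 * Real.pi * x : ℝ) * Complex.I)))) := by
  have hz : ‖(r : ℂ) * Complex.exp ((2 * Real.pi * x : ℝ) * Complex.I)‖ < 1 := by
    rw [norm_mul, Complex.norm_exp_ofReal_mul_I, mul_one, Complex.norm_real, Real.norm_of_nonneg h0.le]; exact h1
  have h := Complex.hasSum_im (Complex.hasSum_taylorSeries_neg_log hz)
  rw [Complex.neg_im, Complex.log_im] at h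
  rw [← hasSum_nat_add_iff' 1] at h
  simp only [Finset.sum_range_one, pow_zero, Nat.cast_zero, div_zero, Complex.zero_im, sub_zero] at h
  refine h.congr_fun ?_
  intro n
  rw [mul_pow, ← Complex.exp_nat_mul]
  have : ((n+1 : ℕ) : ℂ) * ((2 * Real.pi * x : ℝ) * Complex.I) = ((2 * Real.pi * (n+1 : ℕ) * x : ℝ) : ℂ) * Complex.I := by
    push_cast; ring
  rw [this]
  have : (r:ℂ) ^ (n+1) * Complex.exp (((2 * Real.pi * (n+1 : ℕ) * x : ℝ) : ℂ) * Complex.I) / ((n+1 : ℕ) : ℂ)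
     = ((r ^ (n+1) / ((n:ℝ)+1) : ℝ) : ℂ) * Complex.exp (((2 * Real.pi * (n+1 : ℕ) * x : ℝ) : ℂ) * Complex.I) := by
    push_cast; ring
  rw [this, Complex.im_ofReal_mul, Complex.exp_ofReal_mul_I_im, mul_comm]

open Filter Topology in
lemma saw_lim (x : ℝ) (h0 : 0 < x) (h1 : x < 1) :
    Tendsto (fun r : ℝ => -(Complex.arg (1 - r * Complex.exp ((2 * Real.pi * x : ℝ) * Complex.I))))
      (𝓝[<] 1) (𝓝 (Real.pi * (1/2 - x))) := by
  have hpi := Real.pi_pos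
  have harg := arg_saw x h0 h1
  set z := Complex.exp ((2 * Real.pi * x : ℝ) * Complex.I) with hz
  have hne : 1 - z ≠ 0 := by
    intro h
    have h2 : z.re = 1 := by rw [← sub_eq_zero.1 h]; simp
    rw [hz, Complex.exp_ofReal_mul_I_re, show 2 * Real.pi * x = 2 * (Real.pi * x) by ring, Real.cos_two_mul] at h2
    have := Real.sin_sq_add_cos_sq (Real.pi * x)
    have h3 := Real.sin_pos_of_pos_of_lt_pi (x := Real.pi * x) (by positivity) (by nlinarith)
    nlinarith
  have hsl : 1 - z ∈ Complex.slitPlane := by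
    rw [Complex.mem_slitPlane_iff_arg]
    refine ⟨?_, hne⟩
    rw [harg]; nlinarith
  have hc : ContinuousAt (fun r : ℝ => -(Complex.arg (1 - r * z))) 1 := by
    refine ContinuousAt.neg (ContinuousAt.comp (g := Complex.arg) (f := fun r : ℝ => 1 - (r:ℂ) * z) ?_ ?_)
    · simpa using Complex.continuousAt_arg hsl
    · fun_prop
  have := hc.tendsto
  simp only [Complex.ofReal_one, one_mul, harg] at this
  rw [show -(Real.pi * (x - 1/2)) = Real.pi * (1/2 - x) by ring] at this
  exact this.mono_left nhdsWithin_le_nhds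

section Assembly
open Filter Topology

lemma sin_shift (n : ℕ) (x y : ℝ) (k : ℤ) (h : y = x + k) :
    Real.sin (2 * Real.pi * n * y) = Real.sin (2 * Real.pi * n * x) := by
  have : 2 * Real.pi * n * y = 2 * Real.pi * n * x + ((n * k : ℤ) : ℝ) * (2 * Real.pi) := by
    rw [h]; push_cast; ring
  rw [this, Real.sin_add_int_mul_two_pi]

lemma sin_split (n : ℕ) (x y z : ℝ) (k l : ℤ) (h : y = x + 2/5 + k) (h' : z = x - 2/5 + l) :
    Real.sin (2 * Real.pi * n * x) * (1 - Real.cos (4 * Real.pi * n / 5)) =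
      Real.sin (2 * Real.pi * n * x) - 1/2 * Real.sin (2 * Real.pi * n * y)
        - 1/2 * Real.sin (2 * Real.pi * n * z) := by
  rw [sin_shift n _ y k h, sin_shift n _ z l h']
  have e1 : 2 * Real.pi * n * (x + 2/5) = 2 * Real.pi * n * x + 4 * Real.pi * n / 5 := by ring
  have e2 : 2 * Real.pi * n * (x - 2/5) = 2 * Real.pi * n * x - 4 * Real.pi * n / 5 := by ring
  rw [e1, e2, Real.sin_add, Real.sin_sub]; ring

lemma bracket_gen (x y z : ℝ) (k l : ℤ) (h : y = x + 2/5 + k) (h' : z = x - 2/5 + l)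
    (hx0 : 0 < x) (hx1 : x < 1) (hy0 : 0 < y) (hy1 : y < 1) (hz0 : 0 < z) (hz1 : z < 1) :
    ∃ F : ℝ → ℝ, (∀ r : ℝ, 0 < r → r < 1 →
      HasSum (fun n : ℕ => Real.sin (2 * Real.pi * (n+1 : ℕ) * x) *
        (1 - Real.cos (4 * Real.pi * (n+1 : ℕ) / 5)) * (r ^ (n+1) / ((n:ℝ)+1))) (F r)) ∧
      Tendsto F (𝓝[<] 1) (𝓝 (Real.pi * (1/2 - x) - 1/2 * (Real.pi * (1/2 - y))
        - 1/2 * (Real.pi * (1/2 - z)))) := by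
  refine ⟨_, fun r h0 h1 => ?_, ((saw_lim x hx0 hx1).sub ((saw_lim y hy0 hy1).const_mul (1/2))).sub
    ((saw_lim z hz0 hz1).const_mul (1/2))⟩
  have := ((saw_hasSum x r h0 h1).sub ((saw_hasSum y r h0 h1).mul_left (1/2))).sub
    ((saw_hasSum z r h0 h1).mul_left (1/2))
  have e : ∀ n : ℕ, Real.sin (2 * Real.pi * (n+1 : ℕ) * x) *
        (1 - Real.cos (4 * Real.pi * (n+1 : ℕ) / 5)) * (r ^ (n+1) / ((n:ℝ)+1)) =
      Real.sin (2 * Real.pi * (n+1 : ℕ) * x) * (r ^ (n+1) / ((n:ℝ)+1)) -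
        1/2 * (Real.sin (2 * Real.pi * (n+1 : ℕ) * y) * (r ^ (n+1) / ((n:ℝ)+1))) -
        1/2 * (Real.sin (2 * Real.pi * (n+1 : ℕ) * z) * (r ^ (n+1) / ((n:ℝ)+1))) := by
    intro n
    rw [sin_split (n+1) x y z k l h h']; ring
  simp only [e]
  exact this

noncomputable def cc (p a : ℕ) : ℝ :=
  if 5 * a < 2 * p then Real.pi / 2 else if 3 * p < 5 * a then - (Real.pi / 2) else 0

lemma bracket (p a : ℕ) (ha : 0 < a) (hap : a < p) (h2 : 5 * a ≠ 2 * p) (h3 : 5 * a ≠ 3 * p) :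
    ∃ F : ℝ → ℝ, (∀ r : ℝ, 0 < r → r < 1 →
      HasSum (fun n : ℕ => Real.sin (2 * Real.pi * (n+1 : ℕ) * (a / p)) *
        (1 - Real.cos (4 * Real.pi * (n+1 : ℕ) / 5)) * (r ^ (n+1) / ((n:ℝ)+1))) (F r)) ∧
      Tendsto F (𝓝[<] 1) (𝓝 (cc p a)) := by
  have hp : (0:ℝ) < p := by exact_mod_cast (by omega : 0 < p)
  have hx0 : (0:ℝ) < (a:ℝ) / p := by positivity
  have hx1 : (a:ℝ) / p < 1 := by rw [div_lt_one hp]; exact_mod_cast hap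
  set x : ℝ := (a:ℝ)/p with hx
  have hax : (a:ℝ) = x * p := by rw [hx]; field_simp
  have c2 : 5 * a < 2 * p ↔ x < 2/5 := by
    rw [hx, div_lt_iff₀ hp, ← @Nat.cast_lt ℝ]; push_cast
    constructor <;> intro <;> linarith
  have c2' : 2 * p < 5 * a ↔ 2/5 < x := by
    rw [hx, lt_div_iff₀ hp, ← @Nat.cast_lt ℝ]; push_cast
    constructor <;> intro <;> linarith
  have c3 : 5 * a < 3 * p ↔ x < 3/5 := by
    rw [hx, div_lt_iff₀ hp, ← @Nat.cast_lt ℝ]; push_cast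
    constructor <;> intro <;> linarith
  have c3' : 3 * p < 5 * a ↔ 3/5 < x := by
    rw [hx, lt_div_iff₀ hp, ← @Nat.cast_lt ℝ]; push_cast
    constructor <;> intro <;> linarith
  unfold cc
  by_cases A : 5 * a < 2 * p
  · have := c2.1 A
    rw [if_pos A]
    obtain ⟨F, h, h'⟩ := bracket_gen x (x+2/5) (x+3/5) 0 1 (by push_cast; ring) (by push_cast; ring)
      hx0 hx1 (by linarith) (by linarith) (by linarith) (by linarith)
    refine ⟨F, h, ?_⟩
    convert h' using 2; ring
  · have A' := c2'.1 (by omega)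
    rw [if_neg A]
    by_cases B : 3 * p < 5 * a
    · have := c3'.1 B
      rw [if_pos B]
      obtain ⟨F, h, h'⟩ := bracket_gen x (x-3/5) (x-2/5) (-1) 0 (by push_cast; ring) (by push_cast; ring)
        hx0 hx1 (by linarith) (by linarith) (by linarith) (by linarith)
      refine ⟨F, h, ?_⟩
      convert h' using 2; ring
    · have := c3.1 (by omega)
      rw [if_neg B]
      obtain ⟨F, h, h'⟩ := bracket_gen x (x+2/5) (x-2/5) 0 0 (by push_cast; ring) (by push_cast; ring)
        hx0 hx1 (by linarith) (by linarith) (by linarith) (by linarith)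
      refine ⟨F, h, ?_⟩
      convert h' using 2; ring

lemma chi_zero (p : ℕ) [Fact p.Prime] : legendreSym p ((0:ℕ):ℤ) = 0 := by
  simp [legendreSym]

lemma chi_neg (p : ℕ) [Fact p.Prime] (hp : p % 4 = 3) (k a : ℕ) (h : a ≤ k * p) :
    legendreSym p ((k * p - a : ℕ) : ℤ) = - legendreSym p (a : ℤ) := by
  have h1 : (((k * p - a : ℕ) : ℤ) : ZMod p) = ((-1 * (a:ℤ) : ℤ) : ZMod p) := by
    rw [Nat.cast_sub h]; push_cast; simp
  have h2 : legendreSym p ((k * p - a : ℕ) : ℤ) = legendreSym p (-1 * (a:ℤ)) := by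
    unfold legendreSym; rw [h1]
  rw [h2, legendreSym.mul, legendreSym.at_neg_one (by rintro rfl; omega),
    ZMod.χ₄_nat_three_mod_four hp]; ring

lemma cc_sum (p : ℕ) [Fact p.Prime] (hp : p % 4 = 3) :
    ∑ a ∈ Finset.range p, (legendreSym p a : ℝ) * cc p a =
      Real.pi * ((∑ n ∈ Finset.Icc 1 (2 * p / 5), legendreSym p (n : ℤ) : ℤ) : ℝ) := by
  have hpp : 0 < p := (Fact.out : p.Prime).pos
  set u : ℕ → ℝ := fun a => if 5 * a < 2 * p then (legendreSym p a : ℝ) else 0 with hu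
  set v : ℕ → ℝ := fun a => if 3 * p < 5 * a then (legendreSym p a : ℝ) else 0 with hv
  have e1 : ∑ a ∈ Finset.range p, (legendreSym p a : ℝ) * cc p a =
      Real.pi / 2 * (∑ a ∈ Finset.range p, u a - ∑ a ∈ Finset.range p, v a) := by
    rw [← Finset.sum_sub_distrib, Finset.mul_sum]
    refine Finset.sum_congr rfl fun a _ => ?_
    simp only [hu, hv, cc]
    split_ifs
    · omega
    all_goals ring
  have hv0 : v 0 = 0 := by simp [hv]
  have hvp : v p = 0 := by
    have := chi_neg p hp 1 0 (by omega)
    simp only [one_mul, Nat.sub_zero, chi_zero, neg_zero] at this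
    simp [hv, this]
  have e2 : ∑ a ∈ Finset.range p, v a = - ∑ a ∈ Finset.range p, u a := by
    have s1 : ∑ a ∈ Finset.range p, v (a+1) = ∑ a ∈ Finset.range p, v a := by
      have := Finset.sum_range_succ v p
      rw [Finset.sum_range_succ' v p] at this
      linarith
    rw [← s1, ← Finset.sum_range_reflect, ← Finset.sum_neg_distrib]
    refine Finset.sum_congr rfl fun a ha => ?_
    have ha := Finset.mem_range.1 ha
    have : p - 1 - a + 1 = 1 * p - a := by omega
    simp only [hu, hv]
    rw [this, chi_neg p hp 1 a (by omega)]
    by_cases h : 5 * a < 2 * p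
    · rw [if_pos h, if_pos (by omega)]; push_cast; ring
    · rw [if_neg h, if_neg (by omega)]; ring
  have e3 : ∑ a ∈ Finset.range p, u a = ∑ n ∈ Finset.Icc 1 (2 * p / 5), (legendreSym p (n : ℤ) : ℝ) := by
    symm
    have h5 : ¬ (5 ∣ 2 * p) := by
      intro h
      have : 5 ∣ p := (Nat.Coprime.dvd_mul_left (by norm_num)).1 h
      have := (Nat.prime_dvd_prime_iff_eq (by norm_num) (Fact.out : p.Prime)).1 this
      omega
    rw [← Finset.sum_subset_zero_on_sdiff (f := fun n : ℕ => (legendreSym p (n : ℤ) : ℝ)) (g := u) (s₁ := Finset.Icc 1 (2 * p / 5)) (s₂ := Finset.range p)]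
    · intro a ha
      simp only [Finset.mem_Icc, Finset.mem_range] at *; omega
    · intro a ha
      simp only [Finset.mem_Icc, Finset.mem_range, Finset.mem_sdiff] at ha
      simp only [hu]
      rcases Nat.eq_zero_or_pos a with rfl | h0
      · rw [chi_zero]; simp
      · rw [if_neg (by omega)]
    · intro a ha
      simp only [Finset.mem_Icc] at ha
      simp only [hu]
      rw [if_pos (by omega)]
  rw [e1, e2, e3]; push_cast; ring

noncomputable def g0 (p : ℕ) [Fact p.Prime] (n : ℕ) : ℝ :=
  (legendreSym p n : ℝ) * (1 - Real.cos (4 * Real.pi * n / 5))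

lemma five_ne (p : ℕ) [Fact p.Prime] (hp : p % 4 = 3) (a k : ℕ) (hk : k = 2 ∨ k = 3) :
    5 * a ≠ k * p := by
  intro h
  have h1 : 5 ∣ k * p := ⟨a, h.symm⟩
  have : 5 ∣ p := by
    rcases hk with rfl | rfl <;> exact (Nat.Coprime.dvd_mul_left (by norm_num)).1 h1
  have := (Nat.prime_dvd_prime_iff_eq (by norm_num) (Fact.out : p.Prime)).1 this
  omega

lemma power_limit (p : ℕ) [Fact p.Prime] (hp : p % 4 = 3) :
    Tendsto (fun r : ℝ => Real.sqrt p * ∑' n : ℕ, g0 p (n+1) * (r ^ (n+1) / ((n:ℝ)+1))) (𝓝[<] 1)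
      (𝓝 (∑ a ∈ Finset.range p, (legendreSym p a : ℝ) * cc p a)) := by
  have key : ∀ a : ℕ, ∃ F : ℝ → ℝ, a ∈ Finset.range p → (∀ r : ℝ, 0 < r → r < 1 →
      HasSum (fun n : ℕ => (legendreSym p a : ℝ) * (Real.sin (2 * Real.pi * (n+1 : ℕ) * (a / p)) *
        (1 - Real.cos (4 * Real.pi * (n+1 : ℕ) / 5)) * (r ^ (n+1) / ((n:ℝ)+1)))) (F r)) ∧
      Tendsto F (𝓝[<] 1) (𝓝 ((legendreSym p a : ℝ) * cc p a)) := by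
    intro a
    by_cases ha : a ∈ Finset.range p
    · rcases Nat.eq_zero_or_pos a with rfl | h0
      · refine ⟨fun _ => 0, fun _ => ⟨fun r _ _ => ?_, ?_⟩⟩
        · rw [chi_zero]; simpa using hasSum_zero
        · rw [chi_zero]; simp
      · obtain ⟨F, h, h'⟩ := bracket p a h0 (Finset.mem_range.1 ha)
          (five_ne p hp a 2 (by simp)) (five_ne p hp a 3 (by simp))
        exact ⟨fun r => (legendreSym p a : ℝ) * F r, fun _ =>
          ⟨fun r h0 h1 => (h r h0 h1).mul_left _, h'.const_mul _⟩⟩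
    · exact ⟨fun _ => 0, fun h => absurd h ha⟩
  choose F hF using key
  have lim := tendsto_finsetSum (Finset.range p) (fun a ha => (hF a ha).2)
  refine lim.congr' ?_
  have : Set.Ioo (0:ℝ) 1 ∈ 𝓝[<] (1:ℝ) := Ioo_mem_nhdsLT (by norm_num)
  filter_upwards [this] with r hr
  have hs := hasSum_sum (fun a ha => (hF a ha).1 r hr.1 hr.2)
  rw [← tsum_mul_left, ← hs.tsum_eq]
  refine tsum_congr fun n => ?_
  have gf := gauss_fourier p hp (n+1)
  unfold g0
  calc _ = (∑ a ∈ Finset.range p, (legendreSym p a : ℝ) * Real.sin (2 * Real.pi * (n+1 : ℕ) * (a / p))) *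
      ((1 - Real.cos (4 * Real.pi * (n+1 : ℕ) / 5)) * (r ^ (n+1) / ((n:ℝ)+1))) := by
        rw [Finset.sum_mul]; refine Finset.sum_congr rfl fun a _ => by ring
    _ = _ := by rw [gf]; ring

lemma chi_abs (p : ℕ) [Fact p.Prime] (a : ℤ) : |(legendreSym p a : ℝ)| ≤ 1 := by
  by_cases h : (a : ZMod p) = 0
  · rw [(legendreSym.eq_zero_iff p a).2 h]; simp
  · rcases legendreSym.eq_one_or_neg_one p h with h | h <;> rw [h] <;> simp

lemma g0_abs (p : ℕ) [Fact p.Prime] (n : ℕ) : |g0 p n| ≤ 2 := by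
  unfold g0
  rw [abs_mul]
  have h1 := chi_abs p n
  have h2 : |1 - Real.cos (4 * Real.pi * n / 5)| ≤ 2 := by
    rw [abs_le]; constructor <;> linarith [Real.neg_one_le_cos (4 * Real.pi * n / 5), Real.cos_le_one (4 * Real.pi * n / 5)]
  calc _ ≤ 1 * (2:ℝ) := mul_le_mul h1 h2 (abs_nonneg _) (by norm_num)
    _ = 2 := by norm_num

lemma g0_odd (p : ℕ) [Fact p.Prime] (hp : p % 4 = 3) (i : ℕ) (h : i ≤ 5 * p) :
    g0 p (5 * p - i) = - g0 p i := by
  unfold g0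
  rw [chi_neg p hp 5 i h]
  have : 4 * Real.pi * ((5 * p - i : ℕ) : ℝ) / 5 = ((2 * p : ℕ) : ℝ) * (2 * Real.pi) - 4 * Real.pi * i / 5 := by
    rw [Nat.cast_sub h]; push_cast; ring
  rw [this, Real.cos_nat_mul_two_pi_sub]; push_cast; ring

lemma g0_per (p : ℕ) [Fact p.Prime] (i : ℕ) : g0 p (5 * p + i) = g0 p i := by
  unfold g0
  have h1 : legendreSym p ((5 * p + i : ℕ) : ℤ) = legendreSym p (i : ℤ) := by
    unfold legendreSym; push_cast; simp
  have : 4 * Real.pi * ((5 * p + i : ℕ) : ℝ) / 5 = 4 * Real.pi * i / 5 + ((2 * p : ℕ) : ℝ) * (2 * Real.pi) := by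
    push_cast; ring
  rw [this, Real.cos_add_nat_mul_two_pi, h1]

lemma per_bound (g : ℕ → ℝ) (N : ℕ) (hN : 0 < N) (hg : ∀ n, |g n| ≤ 2) (hper : ∀ n, g (N + n) = g n)
    (h0 : ∑ i ∈ Finset.range N, g i = 0) (n : ℕ) : |∑ i ∈ Finset.range n, g i| ≤ 2 * N + 2 := by
  induction n using Nat.strong_induction_on with
  | _ n ih =>
    rcases le_or_gt N n with h | h
    · obtain ⟨m, rfl⟩ := Nat.exists_eq_add_of_le h
      rw [Finset.sum_range_add, h0, zero_add]
      simp only [hper]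
      exact ih m (by omega)
    · calc _ ≤ ∑ i ∈ Finset.range n, |g i| := Finset.abs_sum_le_sum_abs _ _
        _ ≤ ∑ i ∈ Finset.range n, (2:ℝ) := Finset.sum_le_sum fun i _ => hg i
        _ = n * 2 := by simp
        _ ≤ 2 * N + 2 := by
          have : (n:ℝ) ≤ N := by exact_mod_cast h.le
          linarith

lemma g0_sum (p : ℕ) [Fact p.Prime] (hp : p % 4 = 3) :
    ∑ i ∈ Finset.range (5 * p), g0 p (i+1) = 0 := by
  have z : g0 p 0 = 0 := by unfold g0; rw [chi_zero]; simp
  have z' : g0 p (5 * p) = 0 := by have := g0_per p 0; rw [z] at this; simpa using this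
  have s1 : ∑ a ∈ Finset.range (5*p), g0 p (a+1) = ∑ a ∈ Finset.range (5*p), g0 p a := by
    have := Finset.sum_range_succ (g0 p) (5*p)
    rw [Finset.sum_range_succ' (g0 p) (5*p)] at this
    linarith
  have s2 : ∑ a ∈ Finset.range (5*p), g0 p (a+1) = - ∑ a ∈ Finset.range (5*p), g0 p a := by
    rw [← Finset.sum_range_reflect, ← Finset.sum_neg_distrib]
    refine Finset.sum_congr rfl fun a ha => ?_
    have ha := Finset.mem_range.1 ha
    rw [← g0_odd p hp a ha.le]
    congr 1; omega
  linarith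

instance fact5 : Fact (Nat.Prime 5) := ⟨by norm_num⟩

noncomputable def legHom (p : ℕ) [Fact p.Prime] : ℕ →*₀ ℝ where
  toFun n := (legendreSym p (n:ℤ) : ℝ)
  map_zero' := by rw [chi_zero]; simp
  map_one' := by simp [legendreSym]
  map_mul' a b := by push_cast; rw [legendreSym.mul]; push_cast; ring

noncomputable def f1 (p : ℕ) [Fact p.Prime] : ℕ →*₀ ℝ where
  toFun n := legHom p n * (legHom 5 n * legHom 5 n)
  map_zero' := by simp
  map_one' := by simp
  map_mul' a b := by simp only [map_mul]; ring

noncomputable def f2 (p : ℕ) [Fact p.Prime] : ℕ →*₀ ℝ where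
  toFun n := legHom p n * legHom 5 n
  map_zero' := by simp
  map_one' := by simp
  map_mul' a b := by simp only [map_mul]; ring

lemma legHom_abs (p : ℕ) [Fact p.Prime] (n : ℕ) : |legHom p n| ≤ 1 := chi_abs p n

lemma f2_abs (p : ℕ) [Fact p.Prime] (n : ℕ) : |f2 p n| ≤ 1 := by
  change |legHom p n * legHom 5 n| ≤ 1
  rw [abs_mul]
  exact mul_le_one₀ (legHom_abs p n) (abs_nonneg _) (legHom_abs 5 n)

lemma f1_abs (p : ℕ) [Fact p.Prime] (n : ℕ) : |f1 p n| ≤ 1 := by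
  change |legHom p n * (legHom 5 n * legHom 5 n)| ≤ 1
  rw [abs_mul, abs_mul]
  exact mul_le_one₀ (legHom_abs p n) (by positivity)
    (mul_le_one₀ (legHom_abs 5 n) (abs_nonneg _) (legHom_abs 5 n))

lemma cos_leg5 (n : ℕ) : 1 - Real.cos (4 * Real.pi * n / 5) =
    5/4 * (legHom 5 n * legHom 5 n) + Real.sqrt 5 / 4 * legHom 5 n := by
  have c1 := Real.cos_pi_div_five
  have sq : Real.sqrt 5 * Real.sqrt 5 = 5 := Real.mul_self_sqrt (by norm_num)
  have c2 : Real.cos (2 * (Real.pi / 5)) = (Real.sqrt 5 - 1) / 4 := by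
    rw [Real.cos_two_mul, c1]; nlinarith
  obtain ⟨q, r, hr, rfl⟩ : ∃ q r, r < 5 ∧ n = 5 * q + r :=
    ⟨n / 5, n % 5, Nat.mod_lt _ (by norm_num), (Nat.div_add_mod n 5).symm⟩
  have e1 : legHom 5 (5 * q + r) = legHom 5 r := by
    change (legendreSym 5 ((5 * q + r : ℕ):ℤ) : ℝ) = (legendreSym 5 (r:ℤ) : ℝ)
    have : legendreSym 5 ((5 * q + r : ℕ) : ℤ) = legendreSym 5 (r : ℤ) := by
      unfold legendreSym; push_cast
      have : (5 : ZMod 5) = 0 := by decide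
      rw [this]; simp
    rw [this]
  have e2 : Real.cos (4 * Real.pi * ((5 * q + r : ℕ) : ℝ) / 5) = Real.cos (4 * Real.pi * r / 5) := by
    have : 4 * Real.pi * ((5 * q + r : ℕ) : ℝ) / 5 = 4 * Real.pi * r / 5 + ((2 * q : ℕ) : ℝ) * (2 * Real.pi) := by
      push_cast; ring
    rw [this, Real.cos_add_nat_mul_two_pi]
  rw [e1, e2]
  have L : ∀ k : ℕ, legHom 5 k = (legendreSym 5 (k:ℤ) : ℝ) := fun _ => rfl
  rw [L]
  interval_cases r
  · rw [chi_zero]; simp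
  · have : legendreSym 5 ((1:ℕ):ℤ) = 1 := by decide
    have t : 4 * Real.pi * ((1:ℕ):ℝ) / 5 = Real.pi - Real.pi / 5 := by push_cast; ring
    rw [this, t, Real.cos_pi_sub, c1]; push_cast; ring
  · have : legendreSym 5 ((2:ℕ):ℤ) = -1 := by decide
    have t : 4 * Real.pi * ((2:ℕ):ℝ) / 5 = 2 * Real.pi - 2 * (Real.pi / 5) := by push_cast; ring
    rw [this, t, Real.cos_two_pi_sub, c2]; push_cast; ring
  · have : legendreSym 5 ((3:ℕ):ℤ) = -1 := by decide
    have t : 4 * Real.pi * ((3:ℕ):ℝ) / 5 = 2 * (Real.pi / 5) + 2 * Real.pi := by push_cast; ring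
    rw [this, t, Real.cos_add_two_pi, c2]; push_cast; ring
  · have : legendreSym 5 ((4:ℕ):ℤ) = 1 := by decide
    have t : 4 * Real.pi * ((4:ℕ):ℝ) / 5 = (Real.pi / 5 + Real.pi) + 2 * Real.pi := by push_cast; ring
    rw [this, t, Real.cos_add_two_pi, Real.cos_add_pi, c1]; push_cast; ring

lemma g0_split (p : ℕ) [Fact p.Prime] (n : ℕ) :
    g0 p n = 5/4 * f1 p n + Real.sqrt 5 / 4 * f2 p n := by
  change legHom p n * (1 - Real.cos (4 * Real.pi * n / 5)) =
    5/4 * (legHom p n * (legHom 5 n * legHom 5 n)) + Real.sqrt 5 / 4 * (legHom p n * legHom 5 n)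
  rw [cos_leg5]; ring

lemma dir_g0_nonneg (p : ℕ) [Fact p.Prime] (s : ℝ) (h1 : 1 < s) :
    0 ≤ ∑' n : ℕ, g0 p (n+1) * ((n:ℝ)+1) ^ (-s) := by
  have s1 := summable_dir (fun n => f1 p (n+1)) 1 (fun n => f1_abs p _) s h1
  have s2 := summable_dir (fun n => f2 p (n+1)) 1 (fun n => f2_abs p _) s h1
  have e : ∑' n : ℕ, g0 p (n+1) * ((n:ℝ)+1) ^ (-s) =
      5/4 * ∑' n : ℕ, f1 p (n+1) * ((n:ℝ)+1) ^ (-s) +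
      Real.sqrt 5 / 4 * ∑' n : ℕ, f2 p (n+1) * ((n:ℝ)+1) ^ (-s) := by
    rw [← tsum_mul_left, ← tsum_mul_left, ← (s1.mul_left _).tsum_add (s2.mul_left _)]
    refine tsum_congr fun n => ?_
    rw [g0_split]; ring
  rw [e]
  have p1 := dir_nonneg (f1 p) (f1_abs p) s h1
  have p2 := dir_nonneg (f2 p) (f2_abs p) s h1
  positivity

theorem main_result (p : ℕ) [Fact p.Prime] (hp : p % 4 = 3) :
    0 ≤ ∑ n ∈ Finset.Icc 1 (2 * p / 5), legendreSym p (n : ℤ) := by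
  have hpp : 0 < p := (Fact.out : p.Prime).pos
  set K : ℝ := 2 * ((5 * p : ℕ) : ℝ) + 2 with hK
  have hg : ∀ n, |g0 p (n+1)| ≤ K := fun n => by
    have := g0_abs p (n+1)
    have : (0:ℝ) ≤ ((5 * p : ℕ) : ℝ) := by positivity
    linarith
  have hG := per_bound (fun n => g0 p (n+1)) (5 * p) (by omega) (fun n => g0_abs p _)
    (fun n => g0_per p (n+1)) (g0_sum p hp)
  have l1 := abel_power (fun n => g0 p (n+1)) K hg hG
  have l2 := abel_dirichlet (fun n => g0 p (n+1)) K hg hG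
  have hl := ge_of_tendsto l2 (by
    filter_upwards [self_mem_nhdsWithin] with s hs
    exact dir_g0_nonneg p s hs)
  have heq := tendsto_nhds_unique (l1.const_mul (Real.sqrt p)) (power_limit p hp)
  rw [cc_sum p hp] at heq
  have h1 := mul_nonneg (Real.sqrt_nonneg p) hl
  rw [heq] at h1
  have := nonneg_of_mul_nonneg_right h1 Real.pi_pos
  exact_mod_cast this

end Assembly


/-- For every prime `p ≡ 3 (mod 4)`, the sum `∑_{n=1}^{⌊2p/5⌋} (n/p)` of
Legendre symbols is nonnegative. -/
theorem stmt_14 (p : ℕ) [Fact p.Prime] (hp : p % 4 = 3) :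
    0 ≤ ∑ n ∈ Finset.Icc 1 (2 * p / 5), legendreSym p (n : ℤ) := by
  exact main_result p hp
end

section
/- The sum over all primes p ≠ 3 of (1/4)·(log((p−1)/(p+1)))² is strictly less than 0.395. -/
open Finset in
theorem aux_bound (p : ℝ) (hp : 3 ≤ p) :
    (1 / 4 : ℝ) * Real.log ((p - 1) / (p + 1)) ^ 2 ≤
      (3 * p ^ 4 - 2 * p ^ 2 + 2) ^ 2 / (9 * p ^ 6 * (p ^ 2 - 1) ^ 2) := by
  have hp0 : 0 < p := by linarith
  have h1 : (0 : ℝ) ≤ 1 / p := by positivity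
  have h2 : 1 / p < 1 := by rw [div_lt_one hp0]; linarith
  have h := Real.log_div_le_sum_range_add h1 h2 2
  have h' := Real.sum_range_le_log_div h1 h2 0
  have e : (1 + 1 / p) / (1 - 1 / p) = ((p - 1) / (p + 1))⁻¹ := by
    have : p - 1 ≠ 0 := by linarith
    have : p + 1 ≠ 0 := by linarith
    field_simp
  have hq : p ^ 2 - 1 ≠ 0 := by nlinarith
  have e2 : (∑ i ∈ range 2, (1 / p) ^ (2 * i + 1) / (2 * (i : ℝ) + 1))
      + (1 / p) ^ (2 * 2 + 1) / (1 - (1 / p) ^ 2)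
      = (3 * p ^ 4 - 2 * p ^ 2 + 2) / (3 * p ^ 3 * (p ^ 2 - 1)) := by
    simp only [Finset.sum_range_succ, Finset.sum_range_zero]
    have e3 : 1 - (1 / p) ^ 2 = (p ^ 2 - 1) / p ^ 2 := by field_simp
    rw [e3]
    norm_num
    field_simp
    ring
  rw [e2, e, Real.log_inv] at h
  rw [e, Real.log_inv] at h'
  simp only [Finset.sum_range_zero] at h'
  have h3 := pow_le_pow_left₀ h' h 2
  calc _ = (1 / 2 * -Real.log ((p - 1) / (p + 1))) ^ 2 := by ring
    _ ≤ _ := h3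
    _ = _ := by rw [div_pow]; congr 1; ring

theorem aux_tail (p : ℝ) (hp : 3 ≤ p) :
    (1 / 4 : ℝ) * Real.log ((p - 1) / (p + 1)) ^ 2 ≤ 1 / 2 * (1 / (p - 1) - 1 / (p + 1)) := by
  refine (aux_bound p hp).trans ?_
  have a1 : 0 < p - 1 := by linarith
  have a2 : 0 < p + 1 := by linarith
  have hq : 0 < p ^ 2 - 1 := by nlinarith
  have e : 1 / 2 * (1 / (p - 1) - 1 / (p + 1)) = 1 / (p ^ 2 - 1) := by
    have : p ^ 2 - 1 = (p - 1) * (p + 1) := by ring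
    rw [this]; field_simp; ring
  rw [e, div_le_div_iff₀ (by positivity) hq]
  have h9 : 9 ≤ p ^ 2 := by nlinarith
  have key : (3 * p ^ 4 - 2 * p ^ 2 + 2) ^ 2 ≤ 9 * p ^ 6 * (p ^ 2 - 1) := by
    generalize hz : p ^ 2 = z at *
    have e4 : p ^ 4 = z ^ 2 := by rw [← hz]; ring
    have e6 : p ^ 6 = z ^ 3 := by rw [← hz]; ring
    rw [e4, e6]
    nlinarith [mul_nonneg (sq_nonneg z) (sub_nonneg.2 h9)]
  nlinarith [mul_le_mul_of_nonneg_right key hq.le]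

/-- A cheap sieve. -/
def auxTest (n : ℕ) : Bool :=
  [2, 3, 5, 7, 11, 13, 17, 19, 23, 29, 31].all fun q => n % q != 0 || n == q

/-- Integer upper bounds for the terms, scaled by `10 ^ 12`. -/
def auxC (n : ℕ) : ℕ :=
  if n = 2 then 301737250000 else
  if n < 5 then 0 else
  if auxTest n then
    10 ^ 12 * (3 * n ^ 4 - 2 * n ^ 2 + 2) ^ 2 / (9 * n ^ 6 * (n ^ 2 - 1) ^ 2) + 1
  else 0

/-- Accumulated bound. -/
def auxS : ℕ → ℕ
  | 0 => 0
  | n + 1 => auxS n + auxC n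

theorem auxS_val : auxS 1001 ≤ 394400000000 := by decide +kernel

theorem auxTest_prime (n : ℕ) (h : n.Prime) : auxTest n = true := by
  unfold auxTest
  rw [List.all_eq_true]
  intro q hq
  have hq1 : q ≠ 1 := by rintro rfl; simp at hq
  by_cases hd : q ∣ n
  · rcases (Nat.dvd_prime h).1 hd with h1 | h1
    · exact absurd h1 hq1
    · simp [h1]
  · have : n % q ≠ 0 := fun h0 => hd (Nat.dvd_of_mod_eq_zero h0)
    simp [this]

open Classical in
/-- The terms extended by zero. -/
noncomputable def auxF (n : ℕ) : ℝ :=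
  if n.Prime ∧ n ≠ 3 then (1 / 4 : ℝ) * Real.log (((n : ℝ) - 1) / ((n : ℝ) + 1)) ^ 2 else 0

theorem auxF_nonneg (n : ℕ) : 0 ≤ auxF n := by
  unfold auxF; split_ifs <;> positivity

theorem auxF_le (n : ℕ) : auxF n ≤ (auxC n : ℝ) / 10 ^ 12 := by
  unfold auxF
  split_ifs with h
  · obtain ⟨hp, h3⟩ := h
    by_cases h2 : n = 2
    · subst h2
      have e : (((2 : ℕ) : ℝ) - 1) / (((2 : ℕ) : ℝ) + 1) = 3⁻¹ := by norm_num
      rw [e, Real.log_inv]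
      have hl := Real.log_three_lt_d9
      have hl0 : 0 ≤ Real.log 3 := Real.log_nonneg (by norm_num)
      simp only [auxC, if_true]
      have := pow_le_pow_left₀ hl0 hl.le 2
      rw [neg_sq]
      norm_num at this ⊢
      linarith
    · have h5 : 5 ≤ n := by
        by_contra hlt
        have := hp.two_le
        have : n = 4 := by omega
        subst this
        revert hp; decide
      have h5' : (5 : ℝ) ≤ n := by exact_mod_cast h5
      refine (aux_bound n (by linarith)).trans ?_
      simp only [auxC, if_neg h2, if_neg (not_lt.2 h5), auxTest_prime n hp, if_true]
      have hA : 2 * n ^ 2 ≤ 3 * n ^ 4 := by nlinarith [Nat.zero_le n, sq_nonneg (n^2)]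
      have hB : 1 ≤ n ^ 2 := by nlinarith
      have hC : 0 < n ^ 2 - 1 := by have : 25 ≤ n ^ 2 := by nlinarith
                                    omega
      have hlt := Nat.lt_succ_iff.1 (Nat.lt_succ_of_lt (Nat.lt_mul_div_succ
        (10 ^ 12 * (3 * n ^ 4 - 2 * n ^ 2 + 2) ^ 2)
        (show 0 < 9 * n ^ 6 * (n ^ 2 - 1) ^ 2 by positivity)))
      generalize (10 ^ 12 * (3 * n ^ 4 - 2 * n ^ 2 + 2) ^ 2) /
        (9 * n ^ 6 * (n ^ 2 - 1) ^ 2) + 1 = c at *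
      have hr : ((10 ^ 12 * (3 * n ^ 4 - 2 * n ^ 2 + 2) ^ 2 : ℕ) : ℝ) ≤
        ((9 * n ^ 6 * (n ^ 2 - 1) ^ 2 * c : ℕ) : ℝ) := by exact_mod_cast hlt
      push_cast [Nat.cast_sub hA, Nat.cast_sub hB] at hr
      have hC' : (0 : ℝ) < (n : ℝ) ^ 2 - 1 := by nlinarith
      rw [div_le_div_iff₀ (by positivity) (by positivity)]
      linarith
  · positivity

theorem aux_base (n : ℕ) : ∑ i ∈ Finset.range n, auxF i ≤ (auxS n : ℝ) / 10 ^ 12 := by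
  induction n with
  | zero => simp [auxS]
  | succ k ih =>
    rw [Finset.sum_range_succ, auxS]
    have := auxF_le k
    push_cast
    rw [add_div]
    linarith

theorem aux_step (k : ℕ) : ∑ i ∈ Finset.range (1001 + 2 * k), auxF i ≤
    0.3944 + 1 / 2 * (1 / 1000 - 1 / (1000 + 2 * (k : ℝ))) := by
  induction k with
  | zero =>
    have h := aux_base 1001
    have h' : (auxS 1001 : ℝ) ≤ 394400000000 := by exact_mod_cast auxS_val
    have h'' : (auxS 1001 : ℝ) / 10 ^ 12 ≤ 394400000000 / 10 ^ 12 := by gcongr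
    refine (h.trans h'').trans ?_
    norm_num
  | succ k ih =>
    have e : 1001 + 2 * (k + 1) = (1001 + 2 * k) + 1 + 1 := by ring
    rw [e, Finset.sum_range_succ, Finset.sum_range_succ]
    have z : auxF (1001 + 2 * k + 1) = 0 := by
      unfold auxF
      rw [if_neg]
      rintro ⟨hp, -⟩
      rcases hp.eq_two_or_odd with h | h <;> omega
    have t : auxF (1001 + 2 * k) ≤
        1 / 2 * (1 / (1000 + 2 * (k : ℝ)) - 1 / (1000 + 2 * ((k : ℝ) + 1))) := by
      have hk : (0 : ℝ) ≤ k := Nat.cast_nonneg k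
      have ht := aux_tail (((1001 + 2 * k : ℕ) : ℝ)) (by push_cast; linarith)
      have e1 : ((1001 + 2 * k : ℕ) : ℝ) - 1 = 1000 + 2 * (k : ℝ) := by push_cast; ring
      have e2 : ((1001 + 2 * k : ℕ) : ℝ) + 1 = 1000 + 2 * ((k : ℝ) + 1) := by push_cast; ring
      have hn : 0 ≤ (1 / 4 : ℝ) * Real.log ((((1001 + 2 * k : ℕ) : ℝ) - 1) /
        (((1001 + 2 * k : ℕ) : ℝ) + 1)) ^ 2 := by positivity
      unfold auxF
      split_ifs
      · rw [e1, e2] at ht ⊢; exact ht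
      · rw [e1, e2] at ht hn; exact hn.trans ht
    rw [z]
    push_cast
    linarith

theorem aux_all (n : ℕ) : ∑ i ∈ Finset.range n, auxF i ≤ 0.3949 := by
  have h1 : ∑ i ∈ Finset.range n, auxF i ≤ ∑ i ∈ Finset.range (1001 + 2 * n), auxF i :=
    Finset.sum_le_sum_of_subset_of_nonneg (Finset.range_mono (by omega))
      (fun i _ _ => auxF_nonneg i)
  have h2 := aux_step n
  have h3 : (0 : ℝ) ≤ 1 / (1000 + 2 * (n : ℝ)) := by positivity
  linarith

/-- The sum over all primes `p ≠ 3` of `(1/4)·(log((p−1)/(p+1)))²` is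
strictly less than `0.395`. -/
theorem stmt_15 :
    ∑' p : {p : ℕ // p.Prime ∧ p ≠ 3},
        (1 / 4 : ℝ) *
          Real.log ((((p : ℕ) : ℝ) - 1) / (((p : ℕ) : ℝ) + 1)) ^ 2 < 0.395 := by
  have h := tsum_subtype {p : ℕ | p.Prime ∧ p ≠ 3}
    (fun n : ℕ => (1 / 4 : ℝ) * Real.log (((n : ℝ) - 1) / ((n : ℝ) + 1)) ^ 2)
  have e : ({p : ℕ | p.Prime ∧ p ≠ 3}.indicator
      (fun n : ℕ => (1 / 4 : ℝ) * Real.log (((n : ℝ) - 1) / ((n : ℝ) + 1)) ^ 2)) = auxF := by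
    funext n
    simp only [Set.indicator, auxF, Set.mem_ofPred_eq]
  rw [e] at h
  have h2 := Real.tsum_le_of_sum_range_le auxF_nonneg aux_all
  refine lt_of_le_of_lt (h.le.trans h2) (by norm_num)
end

section
/- Let s be a complex number with Re(s) > 1, and let τ(m) denote the number of positive divisors of m. Then Σ_{n=1}^{∞} τ(n²)/n^s = ζ(s)³/ζ(2s), where ζ is the Riemann zeta function. -/
namespace Stmt18

open ArithmeticFunction

/-- `n ↦ τ(n²)`. -/
noncomputable def F : ArithmeticFunction ℂ :=
  ⟨fun n => ((n ^ 2).divisors.card : ℂ), by simp⟩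

open Classical in
/-- Indicator of nonzero squares. -/
noncomputable def Q : ArithmeticFunction ℂ :=
  ⟨fun n => if n ≠ 0 ∧ IsSquare n then 1 else 0, by simp⟩

open Classical in
/-- Indicator of squarefree numbers. -/
noncomputable def M : ArithmeticFunction ℂ :=
  ⟨fun n => if Squarefree n then 1 else 0, by simp⟩

/-- Complex-valued zeta. -/
noncomputable def Z : ArithmeticFunction ℂ := ((ArithmeticFunction.zeta : ArithmeticFunction ℕ) : ArithmeticFunction ℂ)

lemma F_apply (n : ℕ) : F n = ((n ^ 2).divisors.card : ℂ) := rfl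
open Classical in
lemma Q_apply (n : ℕ) : Q n = if n ≠ 0 ∧ IsSquare n then 1 else 0 := rfl
open Classical in
lemma M_apply (n : ℕ) : M n = if Squarefree n then 1 else 0 := rfl

lemma F_mult : F.IsMultiplicative := by
  refine ⟨by simp [F_apply], ?_⟩
  intro m n h
  simp only [F_apply]
  rw [mul_pow, Nat.Coprime.card_divisors_mul (Nat.Coprime.pow 2 2 h)]
  push_cast; rfl

lemma M_mult : M.IsMultiplicative := by
  refine ⟨by simp [M_apply], ?_⟩
  intro m n h
  simp only [M_apply, Nat.squarefree_mul h]
  split_ifs <;> simp_all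

lemma sq_left {m n : ℕ} (h : m.Coprime n) (hs : IsSquare (m * n)) : IsSquare m := by
  obtain ⟨c, hc⟩ := hs
  rw [← sq] at hc
  obtain ⟨d, hd⟩ := exists_eq_pow_of_mul_eq_pow (Nat.isUnit_iff.mpr h) hc
  exact ⟨d, by rw [hd, sq]⟩

lemma Q_mult : Q.IsMultiplicative := by
  refine ⟨by simp [Q_apply], ?_⟩
  intro m n h
  have : (m * n ≠ 0 ∧ IsSquare (m * n)) ↔ (m ≠ 0 ∧ IsSquare m) ∧ (n ≠ 0 ∧ IsSquare n) := by
    constructor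
    · rintro ⟨h0, h1⟩
      exact ⟨⟨left_ne_zero_of_mul h0, sq_left h h1⟩, right_ne_zero_of_mul h0,
        sq_left h.symm (by rwa [mul_comm])⟩
    · rintro ⟨⟨a, b⟩, c, d⟩
      exact ⟨mul_ne_zero a c, b.mul d⟩
  simp only [Q_apply, this]
  split_ifs <;> simp_all

lemma Z_mult : Z.IsMultiplicative := isMultiplicative_zeta.natCast

lemma M_pow {p : ℕ} (hp : p.Prime) (k : ℕ) : M (p ^ k) = if k ≤ 1 then 1 else 0 := by
  rw [M_apply]
  rcases k with _ | _ | k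
  · simp
  · simp [hp.prime.irreducible.squarefree]
  · rw [if_neg, if_neg (by omega)]
    intro h
    have := h p ⟨p ^ k, by ring⟩
    exact hp.one_lt.ne' (Nat.isUnit_iff.mp this)

lemma Q_pow {p : ℕ} (hp : p.Prime) (k : ℕ) : Q (p ^ k) = if Even k then 1 else 0 := by
  rw [Q_apply]
  have : (p ^ k ≠ 0 ∧ IsSquare (p ^ k)) ↔ Even k := by
    constructor
    · rintro ⟨_, c, hc⟩
      have hc' : c ∣ p ^ k := ⟨c, hc⟩
      obtain ⟨j, -, rfl⟩ := (Nat.dvd_prime_pow hp).mp hc'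
      rw [← pow_add] at hc
      exact ⟨j, Nat.pow_right_injective hp.two_le hc⟩
    · rintro ⟨j, rfl⟩
      exact ⟨pow_ne_zero _ hp.ne_zero, p ^ j, by ring⟩
  simp only [this]

lemma Z_pow {p : ℕ} (hp : p.Prime) (k : ℕ) : Z (p ^ k) = 1 := by
  simp [Z, zeta_apply, hp.ne_zero]

lemma mul_Z_pow (f : ArithmeticFunction ℂ) {p : ℕ} (hp : p.Prime) (k : ℕ) :
    (f * Z) (p ^ k) = ∑ i ∈ Finset.range (k + 1), f (p ^ i) := by
  rw [Z, coe_mul_zeta_apply, Nat.sum_divisors_prime_pow hp]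

lemma MZ_pow {p : ℕ} (hp : p.Prime) (k : ℕ) : (M * Z) (p ^ k) = if k = 0 then 1 else 2 := by
  rw [mul_Z_pow _ hp]
  simp only [M_pow hp]
  rcases k with _ | k
  · rw [Finset.sum_range_one]; simp
  · rw [Finset.sum_range_succ', Finset.sum_range_succ']
    simp; norm_num

lemma F_eq : M * Z * Z = F := by
  rw [(((M_mult.mul Z_mult).mul Z_mult).eq_iff_eq_on_prime_powers _ _ F_mult)]
  intro p k hp
  rw [mul_Z_pow _ hp, F_apply, ← pow_mul, Nat.divisors_prime_pow hp]
  simp only [MZ_pow hp, Finset.card_map, Finset.card_range]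
  rw [Finset.sum_range_succ']
  simp [mul_comm]

lemma QM_eq : Q * M = Z := by
  rw [((Q_mult.mul M_mult).eq_iff_eq_on_prime_powers _ _ Z_mult)]
  intro p k hp
  rw [Z_pow hp, mul_apply, Nat.sum_divisorsAntidiagonal' (fun x y => Q x * M y),
    Nat.sum_divisors_prime_pow hp]
  rcases k with _ | k
  · simp [Q_apply, M_apply]
  · rw [Finset.sum_range_succ', Finset.sum_range_succ']
    have h1 : p ^ (k + 1) / p ^ (0 + 1) = p ^ k := by
      rw [Nat.pow_div (by omega) hp.pos]; simp
    rw [h1]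
    simp only [M_pow hp, pow_zero, Nat.div_one, Q_pow hp]
    have : M 1 = 1 := M_mult.1
    by_cases h : Even k <;> simp [h, this, Nat.even_add_one]

lemma sum_M {s : ℂ} (hs : 1 < s.re) : LSeriesSummable (fun n => M n) s := by
  refine LSeriesSummable_of_bounded_of_one_lt_re (m := 1) (fun n _ => ?_) hs
  rw [M_apply]; split_ifs <;> simp

lemma sum_Q {s : ℂ} (hs : 1 < s.re) : LSeriesSummable (fun n => Q n) s := by
  refine LSeriesSummable_of_bounded_of_one_lt_re (m := 1) (fun n _ => ?_) hs
  rw [Q_apply]; split_ifs <;> simp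

lemma sum_Z {s : ℂ} (hs : 1 < s.re) : LSeriesSummable (fun n => Z n) s := by
  simpa [Z] using LSeriesSummable_zeta_iff.mpr hs

lemma L_Z {s : ℂ} (hs : 1 < s.re) : LSeries (fun n => Z n) s = riemannZeta s := by
  simpa [Z] using LSeries_zeta_eq_riemannZeta hs

lemma L_Q {s : ℂ} (hs : 1 < s.re) : LSeries (fun n => Q n) s = riemannZeta (2 * s) := by
  have h2 : 1 < (2 * s).re := by simp; linarith
  rw [← L_Z h2, LSeries, LSeries]
  have hinj : Function.Injective (fun n : ℕ => n ^ 2) := Nat.pow_left_injective (by norm_num)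
  rw [← hinj.tsum_eq (f := fun n => LSeries.term (fun n => Q n) s n)]
  · refine tsum_congr fun n => ?_
    rcases eq_or_ne n 0 with rfl | hn
    · simp
    · rw [LSeries.term_of_ne_zero (pow_ne_zero 2 hn), LSeries.term_of_ne_zero hn]
      have : Q (n ^ 2) = 1 := by simp [Q_apply, hn, IsSquare.sq n]
      rw [this]
      have : Z n = 1 := by simp [Z, hn]
      rw [this]
      congr 1
      have := Complex.natCast_cpow_natCast_mul n 2 s
      push_cast at this ⊢
      exact this.symm
  · intro n hn
    by_contra h
    apply hn
    have : Q n = 0 := by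
      rw [Q_apply, if_neg]
      rintro ⟨-, c, hc⟩
      exact h ⟨c, by simp [hc, sq]⟩
    simp [LSeries.term, this]

end Stmt18

open Stmt18 in
/-- For `Re(s) > 1`, the Dirichlet series of `τ(n²)` (where `τ` is the
divisor-counting function) equals `ζ(s)³/ζ(2s)`. -/
theorem stmt_18 (s : ℂ) (hs : 1 < s.re) :
    ∑' n : ℕ, ((n ^ 2).divisors.card : ℂ) / (n : ℂ) ^ s =
      riemannZeta s ^ 3 / riemannZeta (2 * s) := by
  have h2 : 1 < (2 * s).re := by simp; linarith
  have h0 : riemannZeta (2 * s) ≠ 0 := riemannZeta_ne_zero_of_one_lt_re h2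
  have e1 : ∑' n : ℕ, ((n ^ 2).divisors.card : ℂ) / (n : ℂ) ^ s = LSeries (fun n => F n) s := by
    rw [LSeries]
    refine tsum_congr fun n => ?_
    rcases eq_or_ne n 0 with rfl | hn
    · simp
    · rw [LSeries.term_of_ne_zero hn, F_apply]
  have hMZ := ArithmeticFunction.LSeriesSummable_mul (sum_M hs) (sum_Z hs)
  have e2 := ArithmeticFunction.LSeries_mul' hMZ (sum_Z hs)
  have e3 := ArithmeticFunction.LSeries_mul' (sum_M hs) (sum_Z hs)
  have e4 := ArithmeticFunction.LSeries_mul' (sum_Q hs) (sum_M hs)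
  rw [F_eq] at e2
  rw [QM_eq, L_Z hs, L_Q hs] at e4
  rw [e1, e2, e3, L_Z hs, eq_div_iff h0, e4]
  ring
end

section
/- Let f : ℝ → ℝ be a function which is Lipschitz with constant K and satisfies |f(x)| ≤ C for all real x, where K > 0 and C > 0. Then for all real numbers α and β, the (absolutely convergent) sum over all pairs of positive integers (n, m) such that n·m is a perfect square of (f(nα) − f(nβ))·(f(mα) − f(mβ))/(n·m) is at most 92 · |α − β|^{2/3} · K^{2/3} · C^{4/3}. -/
namespace S19

/-- real cube root of a natural number -/
noncomputable def c (n : ℕ) : ℝ := (n : ℝ) ^ ((1 : ℝ) / 3)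

lemma c_nonneg (n : ℕ) : 0 ≤ c n := by unfold c; positivity

lemma c_cube (n : ℕ) : c n ^ 3 = n := by
  unfold c
  rw [← Real.rpow_natCast, ← Real.rpow_mul (by positivity)]
  norm_num

lemma c_pos {n : ℕ} (h : 0 < n) : 0 < c n := by
  have : (0 : ℝ) < n := by exact_mod_cast h
  unfold c; positivity

lemma c_one : c 1 = 1 := by simp [c]

lemma c_mul (n m : ℕ) : c (n * m) = c n * c m := by
  unfold c
  push_cast
  rw [Real.mul_rpow (by positivity) (by positivity)]

lemma c_sq (n : ℕ) : c n ^ 2 = (n : ℝ) ^ ((2 : ℝ) / 3) := by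
  unfold c
  rw [← Real.rpow_natCast, ← Real.rpow_mul (by positivity)]
  norm_num

lemma c_mono {n m : ℕ} (h : n ≤ m) : c n ≤ c m := by
  unfold c
  have : (n : ℝ) ≤ m := by exact_mod_cast h
  gcongr

lemma c_succ (n : ℕ) : (c (n + 1) - c n) * (c (n+1)^2 + c (n+1) * c n + c n ^ 2) = 1 := by
  have h1 := c_cube n
  have h2 := c_cube (n+1)
  push_cast at h2
  nlinarith

/-- the weight -/
noncomputable def w (u v : ℕ) : ℝ :=
  if u ≤ v then 1 / (c u ^ 2 * (v : ℝ) ^ 2) else 1 / (c v ^ 2 * (u : ℝ) ^ 2)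

lemma w_nonneg (u v : ℕ) : 0 ≤ w u v := by
  unfold w; split_ifs <;> positivity

lemma zsum (N : ℕ) : ∑ i ∈ Finset.range (N + 1), 1 / c (i + 1) ^ 4 ≤ 4 - 3 / c (N + 1) := by
  induction N with
  | zero => simp [c_one]; norm_num
  | succ N ih =>
    rw [Finset.sum_range_succ]
    have hx : 0 < c (N + 1) := c_pos (by omega)
    have hy : 0 < c (N + 1 + 1) := c_pos (by omega)
    have hxy : c (N + 1) ≤ c (N + 1 + 1) := c_mono (by omega)
    have h := c_succ (N + 1)
    set x := c (N + 1)
    set y := c (N + 1 + 1)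
    have key : 1 / y ^ 4 ≤ 3 / x - 3 / y := by
      have hd : 0 ≤ y - x := by linarith
      have e : x ≤ 3 * y ^ 3 * (y - x) := by
        have : x * (y ^ 2 + y * x + x ^ 2) ≤ 3 * y ^ 3 := by
          have a1 : x * y ^ 2 ≤ y * y ^ 2 := by gcongr
          have a2 : x * (y * x) ≤ y * (y * y) := by gcongr
          have a3 : x * x ^ 2 ≤ y * y ^ 2 := by gcongr
          nlinarith
        have := mul_le_mul_of_nonneg_left this hd
        nlinarith
      rw [div_sub_div _ _ hx.ne' hy.ne', div_le_div_iff₀ (by positivity) (by positivity)]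
      nlinarith
    linarith

lemma usum (N : ℕ) : ∑ i ∈ Finset.range (N + 1), 1 / c (i + 1) ^ 2 ≤ 3 * c (N + 1) - 2 := by
  induction N with
  | zero => simp [c_one]; norm_num
  | succ N ih =>
    rw [Finset.sum_range_succ]
    have hx : 0 < c (N + 1) := c_pos (by omega)
    have hy : 0 < c (N + 1 + 1) := c_pos (by omega)
    have hxy : c (N + 1) ≤ c (N + 1 + 1) := c_mono (by omega)
    have h := c_succ (N + 1)
    set x := c (N + 1)
    set y := c (N + 1 + 1)
    have key : 1 / y ^ 2 ≤ 3 * (y - x) := by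
      have hd : 0 ≤ y - x := by linarith
      rw [div_le_iff₀ (by positivity)]
      have : (y ^ 2 + y * x + x ^ 2) ≤ 3 * y ^ 2 := by nlinarith
      have := mul_le_mul_of_nonneg_left this hd
      nlinarith
    linarith

lemma wsum (N : ℕ) : ∑ i ∈ Finset.range (N + 1), ∑ j ∈ Finset.range (N + 1), w (i + 1) (j + 1)
    ≤ 17 / 2 - 9 / c (N + 1) ^ 2 + 3 / ((N : ℝ) + 2) := by
  induction N with
  | zero => simp [c_one, w]; norm_num
  | succ N ih =>
    rw [Finset.sum_range_succ]
    have e1 : ∑ i ∈ Finset.range (N + 1), ∑ j ∈ Finset.range (N + 1 + 1), w (i + 1) (j + 1)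
        = ∑ i ∈ Finset.range (N + 1), ∑ j ∈ Finset.range (N + 1), w (i + 1) (j + 1)
          + ∑ i ∈ Finset.range (N + 1), w (i + 1) (N + 1 + 1) := by
      rw [← Finset.sum_add_distrib]
      refine Finset.sum_congr rfl fun i _ => ?_
      rw [Finset.sum_range_succ]
    rw [e1, Finset.sum_range_succ (fun j => w (N + 1 + 1) (j + 1))]
    have e2 : ∑ i ∈ Finset.range (N + 1), w (i + 1) (N + 1 + 1)
        = (∑ i ∈ Finset.range (N + 1), 1 / c (i + 1) ^ 2) * (1 / ((N : ℝ) + 2) ^ 2) := by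
      rw [Finset.sum_mul]
      refine Finset.sum_congr rfl fun i hi => ?_
      have := Finset.mem_range.1 hi
      rw [w, if_pos (by omega)]
      push_cast
      rw [one_div_mul_one_div]
      ring_nf
    have e3 : ∑ i ∈ Finset.range (N + 1), w (N + 1 + 1) (i + 1)
        = (∑ i ∈ Finset.range (N + 1), 1 / c (i + 1) ^ 2) * (1 / ((N : ℝ) + 2) ^ 2) := by
      rw [Finset.sum_mul]
      refine Finset.sum_congr rfl fun i hi => ?_
      have := Finset.mem_range.1 hi
      rw [w, if_neg (by omega)]
      push_cast
      rw [one_div_mul_one_div]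
      ring_nf
    have e4 : w (N + 1 + 1) (N + 1 + 1) ≤ 1 / ((N : ℝ) + 2) ^ 2 := by
      rw [w, if_pos le_rfl]
      push_cast
      have : (1 : ℝ) ≤ c (N + 1 + 1) ^ 2 := by
        have := c_mono (show 1 ≤ N + 1 + 1 by omega)
        rw [c_one] at this
        nlinarith
      have h2 : ((N : ℝ) + 1 + 1) = N + 2 := by ring
      rw [h2]
      apply one_div_le_one_div_of_le (by positivity)
      nlinarith [sq_nonneg ((N : ℝ) + 2)]
    have hu := mul_le_mul_of_nonneg_right (usum N)
      (show 0 ≤ 1 / ((N : ℝ) + 2) ^ 2 by positivity)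
    rw [e2, e3]
    have hx : 0 < c (N + 1) := c_pos (by omega)
    have hy : 0 < c (N + 1 + 1) := c_pos (by omega)
    have hxy : c (N + 1) ≤ c (N + 1 + 1) := c_mono (by omega)
    have h := c_succ (N + 1)
    have hy3 : c (N + 1 + 1) ^ 3 = (N : ℝ) + 2 := by rw [c_cube]; push_cast; ring
    set x := c (N + 1)
    set y := c (N + 1 + 1)
    have k1 : 6 * x * (1 / ((N : ℝ) + 2) ^ 2) ≤ 9 / x ^ 2 - 9 / y ^ 2 := by
      have hd : 0 ≤ y - x := by linarith
      have k0 : 6 * x * (1 / ((N : ℝ) + 2) ^ 2) ≤ 6 / y ^ 5 := by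
        rw [← hy3, mul_one_div, div_le_div_iff₀ (by positivity) (by positivity)]
        have : x * y ^ 5 ≤ y * y ^ 5 := by gcongr
        nlinarith
      refine k0.trans ?_
      have e : 2 * x ^ 2 ≤ 3 * y ^ 3 * ((y - x) * (y + x)) := by
        have : 2 * x ^ 2 * (y ^ 2 + y * x + x ^ 2) ≤ 3 * y ^ 3 * (y + x) := by
          have a1 : x ^ 2 * y ^ 2 ≤ y ^ 2 * y ^ 2 := by gcongr
          have a2 : x * (x ^ 2 * y) ≤ x * (y ^ 2 * y) := by gcongr
          have a3 : x * x ^ 3 ≤ x * y ^ 3 := by gcongr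
          have a4 : x * y ^ 3 ≤ y * y ^ 3 := by gcongr
          nlinarith
        have := mul_le_mul_of_nonneg_left this hd
        nlinarith
      rw [div_sub_div _ _ (by positivity) (by positivity),
        div_le_div_iff₀ (by positivity) (by positivity)]
      have := mul_le_mul_of_nonneg_left e (show 0 ≤ 3 * y ^ 2 by positivity)
      nlinarith
    have k2 : 3 / ((N : ℝ) + 2) - 3 / ((N : ℝ) + 3) ≤ 3 * (1 / ((N : ℝ) + 2) ^ 2) := by
      have : (0 : ℝ) ≤ N := by positivity
      rw [div_sub_div _ _ (by positivity) (by positivity), mul_one_div,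
        div_le_div_iff₀ (by positivity) (by positivity)]
      nlinarith
    have h3 : ((N + 1 : ℕ) : ℝ) + 2 = N + 3 := by push_cast; ring
    rw [h3]
    linarith

lemma wsum' (N : ℕ) : ∑ i ∈ Finset.range (N + 1), ∑ j ∈ Finset.range (N + 1), w (i + 1) (j + 1)
    ≤ 17 / 2 := by
  refine (wsum N).trans ?_
  have hx : 0 < c (N + 1) := c_pos (by omega)
  have h1 : 1 ≤ c (N + 1) := by
    have := c_mono (show 1 ≤ N + 1 by omega)
    rwa [c_one] at this
  have hc : c (N + 1) ^ 3 = (N : ℝ) + 1 := by rw [c_cube]; push_cast; ring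
  have : 3 / ((N : ℝ) + 2) ≤ 9 / c (N + 1) ^ 2 := by
    rw [div_le_div_iff₀ (by positivity) (by positivity)]
    nlinarith [mul_le_mul_of_nonneg_left h1 (sq_nonneg (c (N+1)))]
  linarith

lemma total (N : ℕ) : ∑ p ∈ Finset.range (N + 1) ×ˢ (Finset.range (N + 1) ×ˢ Finset.range (N + 1)),
    1 / c (p.1 + 1) ^ 4 * w (p.2.1 + 1) (p.2.2 + 1) ≤ 34 := by
  rw [Finset.sum_product]
  simp_rw [← Finset.mul_sum]
  rw [← Finset.sum_mul, Finset.sum_product]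
  have h1 := zsum N
  have hx : 0 < c (N + 1) := c_pos (by omega)
  have h2 : 0 < 3 / c (N + 1) := by positivity
  have h3 := wsum' N
  have h4 : 0 ≤ ∑ i ∈ Finset.range (N + 1), ∑ j ∈ Finset.range (N + 1), w (i + 1) (j + 1) :=
    Finset.sum_nonneg fun _ _ => Finset.sum_nonneg fun _ _ => w_nonneg _ _
  nlinarith

lemma sq_cop {a b s : ℕ} (h : Nat.Coprime a b) (hs : a * b = s ^ 2) : ∃ u, a = u ^ 2 := by
  exact exists_eq_pow_of_mul_eq_pow (Nat.isUnit_iff.2 h) hs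

lemma param (n m : ℕ) (hn : 0 < n) (hm : 0 < m) (h : IsSquare (n * m)) :
    ∃ p : ℕ × ℕ × ℕ, n = (p.1 + 1) * (p.2.1 + 1) ^ 2 ∧ m = (p.1 + 1) * (p.2.2 + 1) ^ 2 := by
  obtain ⟨g, n', m', hg, hco, rfl, rfl⟩ := Nat.exists_coprime' (Nat.gcd_pos_of_pos_left m hn)
  have hn' : 0 < n' := Nat.pos_of_mul_pos_right hn
  have hm' : 0 < m' := Nat.pos_of_mul_pos_right hm
  obtain ⟨r, hr⟩ := h
  have hd : g ∣ r := by
    have : g ^ 2 ∣ r ^ 2 := ⟨n' * m', by rw [sq r, ← hr]; ring⟩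
    exact (Nat.pow_dvd_pow_iff (by norm_num)).1 this
  obtain ⟨s, rfl⟩ := hd
  have hs : n' * m' = s ^ 2 := by
    have : g ^ 2 * (n' * m') = g ^ 2 * s ^ 2 := by nlinarith
    exact Nat.eq_of_mul_eq_mul_left (by positivity) this
  obtain ⟨u, hu⟩ := sq_cop hco hs
  obtain ⟨v, hv⟩ := sq_cop hco.symm ((mul_comm _ _).trans hs)
  have hu0 : 0 < u := by
    rcases Nat.eq_zero_or_pos u with h | h
    · subst h; simp at hu; omega
    · exact h
  have hv0 : 0 < v := by
    rcases Nat.eq_zero_or_pos v with h | h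
    · subst h; simp at hv; omega
    · exact h
  refine ⟨(g - 1, u - 1, v - 1), ?_, ?_⟩
  · simp only [Nat.sub_add_cancel hg, Nat.sub_add_cancel hu0, hu]; ring
  · simp only [Nat.sub_add_cancel hg, Nat.sub_add_cancel hv0, hv]; ring

lemma interp {x a b : ℝ} (hx : 0 ≤ x) (ha : x ≤ a) (hb : x ≤ b) :
    x ≤ a ^ ((2 : ℝ) / 3) * b ^ ((1 : ℝ) / 3) := by
  calc x = x ^ ((2 : ℝ) / 3) * x ^ ((1 : ℝ) / 3) := by
        rw [← Real.rpow_add_of_nonneg hx (by norm_num) (by norm_num)]; norm_num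
    _ ≤ _ := by
        have : 0 ≤ a := hx.trans ha
        gcongr

/-- algebraic identity for the ordered case -/
lemma ident (g u v : ℕ) (hg : 0 < g) (hu : 0 < u) (hv : 0 < v) :
    c (g * u ^ 2) ^ 2 / (((g * u ^ 2 : ℕ) : ℝ) * ((g * v ^ 2 : ℕ) : ℝ))
      = 1 / c g ^ 4 * (1 / (c u ^ 2 * (v : ℝ) ^ 2)) := by
  have h1 := c_pos hg
  have h2 := c_pos hu
  have h3 : (0 : ℝ) < v := by exact_mod_cast hv
  rw [sq u, c_mul, c_mul]
  push_cast
  rw [← c_cube g, ← c_cube u]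
  field_simp

lemma ordered (f : ℝ → ℝ) (K C : ℝ) (hK : 0 < K) (hC : 0 < C)
    (hLip : ∀ x y : ℝ, |f x - f y| ≤ K * |x - y|)
    (hbd : ∀ x : ℝ, |f x| ≤ C) (α β : ℝ) (n m : ℕ) :
    |f (n * α) - f (n * β)| * |f (m * α) - f (m * β)| ≤
      ((K * |α - β|) ^ ((2 : ℝ) / 3) * (2 * C) ^ ((4 : ℝ) / 3)) * c n ^ 2 := by
  have hb : ∀ k : ℕ, |f (k * α) - f (k * β)| ≤ 2 * C := fun k => by
    have := abs_sub (f (k * α)) (f (k * β))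
    linarith [hbd (k * α), hbd (k * β)]
  have hl : |f (n * α) - f (n * β)| ≤ (K * |α - β|) * n := by
    refine (hLip _ _).trans (le_of_eq ?_)
    rw [← mul_sub, abs_mul, Nat.abs_cast]; ring
  have := interp (abs_nonneg _) hl (hb n)
  rw [Real.mul_rpow (by positivity) (by positivity), ← c_sq] at this
  have h43 : (2 * C) ^ ((4 : ℝ) / 3) = (2 * C) ^ ((1 : ℝ) / 3) * (2 * C) := by
    nth_rewrite 3 [← Real.rpow_one (2 * C)]
    rw [← Real.rpow_add (by positivity)]; norm_num
  calc _ ≤ ((K * |α - β|) ^ ((2 : ℝ) / 3) * c n ^ 2 * (2 * C) ^ ((1 : ℝ) / 3)) * (2 * C) := by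
        gcongr
        exact hb m
    _ = _ := by rw [h43]; ring

lemma term_bd (f : ℝ → ℝ) (K C : ℝ) (hK : 0 < K) (hC : 0 < C)
    (hLip : ∀ x y : ℝ, |f x - f y| ≤ K * |x - y|)
    (hbd : ∀ x : ℝ, |f x| ≤ C) (α β : ℝ) (n m g u v : ℕ)
    (hg : 0 < g) (hu : 0 < u) (hv : 0 < v) (hn : n = g * u ^ 2) (hm : m = g * v ^ 2) :
    |(f (n * α) - f (n * β)) * (f (m * α) - f (m * β)) / ((n : ℝ) * (m : ℝ))| ≤
      ((K * |α - β|) ^ ((2 : ℝ) / 3) * (2 * C) ^ ((4 : ℝ) / 3)) * (1 / c g ^ 4 * w u v) := by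
  have hnm : (0 : ℝ) ≤ (n : ℝ) * m := by positivity
  rw [abs_div, abs_mul, abs_of_nonneg hnm]
  unfold w
  split_ifs with h
  · rw [← ident g u v hg hu hv, ← hn, ← hm, ← mul_div_assoc]
    exact div_le_div_of_nonneg_right (ordered f K C hK hC hLip hbd α β n m) hnm
  · rw [← ident g v u hg hv hu, ← hn, ← hm, ← mul_div_assoc, mul_comm (m : ℝ) (n : ℝ),
      mul_comm (|f (n * α) - f (n * β)|)]
    exact div_le_div_of_nonneg_right (ordered f K C hK hC hLip hbd α β m n) hnm

end S19


/-- If `f : ℝ → ℝ` is Lipschitz with constant `K` and bounded by `C`, then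
for all real `α, β`, the sum over pairs of positive integers `(n,m)` with
`n·m` a perfect square of `(f(nα) − f(nβ))(f(mα) − f(mβ))/(nm)` converges
absolutely and is at most `92 |α−β|^{2/3} K^{2/3} C^{4/3}`. -/
theorem stmt_19 (f : ℝ → ℝ) (K C : ℝ) (hK : 0 < K) (hC : 0 < C)
    (hLip : ∀ x y : ℝ, |f x - f y| ≤ K * |x - y|)
    (hbd : ∀ x : ℝ, |f x| ≤ C) (α β : ℝ) :
    Summable (fun q : {q : ℕ × ℕ // 0 < q.1 ∧ 0 < q.2 ∧ IsSquare (q.1 * q.2)} =>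
        |(f ((q : ℕ × ℕ).1 * α) - f ((q : ℕ × ℕ).1 * β)) *
            (f ((q : ℕ × ℕ).2 * α) - f ((q : ℕ × ℕ).2 * β)) /
          (((q : ℕ × ℕ).1 : ℝ) * ((q : ℕ × ℕ).2 : ℝ))|) ∧
      ∑' q : {q : ℕ × ℕ // 0 < q.1 ∧ 0 < q.2 ∧ IsSquare (q.1 * q.2)},
          (f ((q : ℕ × ℕ).1 * α) - f ((q : ℕ × ℕ).1 * β)) *
              (f ((q : ℕ × ℕ).2 * α) - f ((q : ℕ × ℕ).2 * β)) /
            (((q : ℕ × ℕ).1 : ℝ) * ((q : ℕ × ℕ).2 : ℝ)) ≤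
        92 * |α - β| ^ ((2 : ℝ) / 3) * K ^ ((2 : ℝ) / 3) * C ^ ((4 : ℝ) / 3) := by
  classical
  set F : {q : ℕ × ℕ // 0 < q.1 ∧ 0 < q.2 ∧ IsSquare (q.1 * q.2)} → ℝ := fun q =>
    (f ((q : ℕ × ℕ).1 * α) - f ((q : ℕ × ℕ).1 * β)) *
      (f ((q : ℕ × ℕ).2 * α) - f ((q : ℕ × ℕ).2 * β)) /
        (((q : ℕ × ℕ).1 : ℝ) * ((q : ℕ × ℕ).2 : ℝ)) with hF
  set A : ℝ := (K * |α - β|) ^ ((2 : ℝ) / 3) * (2 * C) ^ ((4 : ℝ) / 3) with hA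
  have hA0 : 0 ≤ A := by positivity
  choose φ hφ1 hφ2 using fun q : {q : ℕ × ℕ // 0 < q.1 ∧ 0 < q.2 ∧ IsSquare (q.1 * q.2)} =>
    S19.param q.1.1 q.1.2 q.2.1 q.2.2.1 q.2.2.2
  have hinj : Function.Injective φ := by
    intro a b hab
    apply Subtype.ext
    apply Prod.ext
    · rw [hφ1 a, hφ1 b, hab]
    · rw [hφ2 a, hφ2 b, hab]
  have hterm : ∀ q, |F q| ≤ A * (1 / S19.c ((φ q).1 + 1) ^ 4 *
      S19.w ((φ q).2.1 + 1) ((φ q).2.2 + 1)) := fun q =>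
    S19.term_bd f K C hK hC hLip hbd α β _ _ _ _ _ (Nat.succ_pos _) (Nat.succ_pos _)
      (Nat.succ_pos _) (hφ1 q) (hφ2 q)
  have hfin : ∀ s : Finset {q : ℕ × ℕ // 0 < q.1 ∧ 0 < q.2 ∧ IsSquare (q.1 * q.2)},
      ∑ q ∈ s, |F q| ≤ A * 34 := by
    intro s
    set N := s.sup (fun q => (φ q).1 + (φ q).2.1 + (φ q).2.2) with hN
    have hsub : s.image φ ⊆
        Finset.range (N + 1) ×ˢ (Finset.range (N + 1) ×ˢ Finset.range (N + 1)) := by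
      intro p hp
      obtain ⟨q, hq, rfl⟩ := Finset.mem_image.1 hp
      have := Finset.le_sup (f := fun q => (φ q).1 + (φ q).2.1 + (φ q).2.2) hq
      simp only [Finset.mem_product, Finset.mem_range]
      simp only [← hN] at this
      omega
    calc ∑ q ∈ s, |F q| ≤ ∑ q ∈ s, A * (1 / S19.c ((φ q).1 + 1) ^ 4 *
          S19.w ((φ q).2.1 + 1) ((φ q).2.2 + 1)) := Finset.sum_le_sum fun q _ => hterm q
      _ = A * ∑ p ∈ s.image φ, (1 / S19.c (p.1 + 1) ^ 4 * S19.w (p.2.1 + 1) (p.2.2 + 1)) := by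
          rw [Finset.sum_image hinj.injOn, Finset.mul_sum]
      _ ≤ A * 34 := by
          refine mul_le_mul_of_nonneg_left (le_trans ?_ (S19.total N)) hA0
          refine Finset.sum_le_sum_of_subset_of_nonneg hsub fun p _ _ => ?_
          exact mul_nonneg (by positivity) (S19.w_nonneg _ _)
  have hsum : Summable fun q => |F q| := summable_of_sum_le (fun _ => abs_nonneg _) hfin
  refine ⟨hsum, ?_⟩
  have h1 : ∑' q, F q ≤ ∑' q, |F q| := hsum.of_abs.tsum_le_tsum (fun q => le_abs_self _) hsum
  have h2 : ∑' q, |F q| ≤ A * 34 := Real.tsum_le_of_sum_le (fun _ => abs_nonneg _) hfin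
  refine (h1.trans h2).trans ?_
  have h27 : (2 : ℝ) ^ ((4 : ℝ) / 3) ≤ 2.7 := by
    have h0 : (0 : ℝ) ≤ (2 : ℝ) ^ ((4 : ℝ) / 3) := by positivity
    have h3 : ((2 : ℝ) ^ ((4 : ℝ) / 3)) ^ 3 = 16 := by
      rw [← Real.rpow_natCast, ← Real.rpow_mul (by norm_num)]
      norm_num
    by_contra hc
    push Not at hc
    have := pow_lt_pow_left₀ hc (by norm_num) (show 3 ≠ 0 by norm_num)
    rw [h3] at this
    norm_num at this
  rw [hA, Real.mul_rpow hK.le (abs_nonneg _), Real.mul_rpow (by norm_num) hC.le]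
  have hP : 0 ≤ |α - β| ^ ((2 : ℝ) / 3) * K ^ ((2 : ℝ) / 3) * C ^ ((4 : ℝ) / 3) := by positivity
  nlinarith
end
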